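/- Let L ≥ 2 be an integer and let η(L) ∈ Ξ_∞ be the binary sequence obtained from the hierarchical weighted word by fattening each entry, i.e. f(η(L)) = ζ̃(L). If p < 1/(576(L+1)²), then ℙ_p{ξ ∈ Ξ : (η(L), ξ) is compatible} > 0. -/

import Mathlib

open Filter Set MeasureTheory
open scoped ENNReal NNReal

namespace Paper

/-! ### Binary sequences and compatibility -/

/-- Delete the `i`-th entry of a sequence, shifting everything to the right of it
one step to the left. -/
def deleteAt {α : Type*} (ξ : ℕ → α) (i : ℕ) : ℕ → α :=
  fun j => if j < i then ξ j else ξ (j + 1)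

/-- The annihilation operator `Δ_i^0` on binary sequences: delete the `i`-th digit
if it is a zero (`false`), otherwise do nothing. -/
def delta0 (ξ : ℕ → Bool) (i : ℕ) : ℕ → Bool :=
  if ξ i = false then deleteAt ξ i else ξ

/-- The annihilation operator `Δ_i^1` on binary sequences: delete the `i`-th digit
if it is a one (`true`), otherwise do nothing. -/
def delta1 (ξ : ℕ → Bool) (i : ℕ) : ℕ → Bool :=
  if ξ i = true then deleteAt ξ i else ξ

/-- `Reach1 η η'` : `η'` is obtained from `η` by finitely many applications of
operators `Δ_·^1`. -/
def Reach1 : (ℕ → Bool) → (ℕ → Bool) → Prop :=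
  Relation.ReflTransGen fun a b => ∃ i, b = delta1 a i

/-- `Reach0 ξ ξ'` : `ξ'` is obtained from `ξ` by finitely many applications of
operators `Δ_·^0`. -/
def Reach0 : (ℕ → Bool) → (ℕ → Bool) → Prop :=
  Relation.ReflTransGen fun a b => ∃ i, b = delta0 a i

/-- Compatibility of an ordered pair of binary sequences: one can delete ones from `η`
and zeroes from `ξ` so that the resulting sequences converge (in the product topology)
to a common limit. -/
def Compatible (η ξ : ℕ → Bool) : Prop :=
  ∃ (ηs ξs : ℕ → ℕ → Bool) (l : ℕ → Bool),
    (∀ k, Reach1 η (ηs k)) ∧ (∀ k, Reach0 ξ (ξs k)) ∧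
      Tendsto ηs atTop (nhds l) ∧ Tendsto ξs atTop (nhds l)

/-- `μ` is the product Bernoulli measure on `{0,1}^ℕ` with parameter `p`. -/
def IsBernoulliProduct (μ : Measure (ℕ → Bool)) (p : ℝ) : Prop :=
  IsProbabilityMeasure μ ∧
    ∀ (s : Finset ℕ) (b : ℕ → Bool),
      μ {ξ | ∀ i ∈ s, ξ i = b i} = ∏ i ∈ s, ENNReal.ofReal (if b i then p else 1 - p)

/-- The set `Ξ_∞` of binary sequences with infinitely many ones and infinitely many
zeroes. -/
def Xinf (ξ : ℕ → Bool) : Prop :=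
  (∀ n, ∃ m, n ≤ m ∧ ξ m = true) ∧ ∀ n, ∃ m, n ≤ m ∧ ξ m = false

/-- Length of the run of ones of `ξ` starting at position `n` (junk value `0` if the
run is infinite). -/
noncomputable def runLen (ξ : ℕ → Bool) (n : ℕ) : ℕ :=
  letI := Classical.dec (∃ k, ξ (n + k) = false)
  if h : ∃ k, ξ (n + k) = false then Nat.find h else 0

/-- The position in `ξ` at which the `j`-th letter of the weighted word `f ξ` starts. -/
noncomputable def fpos (ξ : ℕ → Bool) : ℕ → ℕ
  | 0 => 0
  | j + 1 => fpos ξ j + max (runLen ξ (fpos ξ j)) 1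

/-- The run-length map `f : Ξ_∞ → Ψ`, replacing each maximal run of ones by a single
letter whose weight is the length of the run (zeroes being kept as letters of
weight `0`). -/
noncomputable def fmap (ξ : ℕ → Bool) : ℕ → ℕ :=
  fun j => runLen ξ (fpos ξ j)

/-! ### Weighted words -/

/-- The set `Ψ` of weighted words: a weight `≥ 1` is always followed by a weight `0`. -/
def Psi (ψ : ℕ → ℕ) : Prop := ∀ i, 1 ≤ ψ i → ψ (i + 1) = 0

/-- The annihilation operator `Δ_i^0` on weighted words. -/
def pdelta0 (ψ : ℕ → ℕ) (i : ℕ) : ℕ → ℕ :=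
  if ψ i ≠ 0 then ψ
  else if i = 0 ∨ ψ (i - 1) = 0 ∨ ψ (i + 1) = 0 then deleteAt ψ i
  else fun j => if j + 1 < i then ψ j else if j + 1 = i then ψ (i - 1) + ψ (i + 1) else ψ (j + 2)

/-- The annihilation operator `Δ_i^1` on weighted words. -/
def pdelta1 (ψ : ℕ → ℕ) (i : ℕ) : ℕ → ℕ :=
  if ψ i = 0 then ψ
  else if ψ i = 1 then deleteAt ψ i
  else Function.update ψ i (ψ i - 1)

/-- Finitely many applications of operators `Δ_·^1` on weighted words. -/
def PReach1 : (ℕ → ℕ) → (ℕ → ℕ) → Prop :=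
  Relation.ReflTransGen fun a b => ∃ i, b = pdelta1 a i

/-- Finitely many applications of operators `Δ_·^0` on weighted words. -/
def PReach0 : (ℕ → ℕ) → (ℕ → ℕ) → Prop :=
  Relation.ReflTransGen fun a b => ∃ i, b = pdelta0 a i

/-- Compatibility of an ordered pair of weighted words. -/
def CompatibleP (ζ ψ : ℕ → ℕ) : Prop :=
  ∃ (ζs ψs : ℕ → ℕ → ℕ) (l : ℕ → ℕ),
    (∀ k, PReach1 ζ (ζs k)) ∧ (∀ k, PReach0 ψ (ψs k)) ∧
      (∀ k, Psi (ζs k)) ∧ (∀ k, Psi (ψs k)) ∧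
      Tendsto ζs atTop (nhds l) ∧ Tendsto ψs atTop (nhds l)

/-! ### The oriented percolation process -/

/-- Oriented edges of the graph `G`: from `u` to `u + (0,1)` and from `u` to `u + (1,1)`. -/
def IsStep (u v : ℕ × ℕ) : Prop :=
  (v.1 = u.1 ∧ v.2 = u.2 + 1) ∨ (v.1 = u.1 + 1 ∧ v.2 = u.2 + 1)

/-- Open vertices of the configuration `ω_{ζ,ψ}`.  (Sequences are `0`-indexed in this
formalization, so the entry of `ζ` at the paper's position `v₁ ≥ 1` is `ζ (v₁ - 1)`.) -/
def OpenV (ζ ψ : ℕ → ℕ) (v : ℕ × ℕ) : Prop :=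
  v = (0, 0) ∨ (1 ≤ v.1 ∧ 1 ≤ v.2 ∧ ψ (v.2 - 1) ≤ ζ (v.1 - 1))

/-- Heavy vertices: `v₂ = 0`, or the row weight `ψ_{v₂}` is positive. -/
def Heavy (ψ : ℕ → ℕ) (v : ℕ × ℕ) : Prop := v.2 = 0 ∨ 1 ≤ ψ (v.2 - 1)

/-- `π 0, π 1, …, π n` is an open oriented path in `ω_{ζ,ψ}`. -/
def IsOpenPath (ζ ψ : ℕ → ℕ) (π : ℕ → ℕ × ℕ) (n : ℕ) : Prop :=
  (∀ i < n, IsStep (π i) (π (i + 1))) ∧ ∀ i ≤ n, OpenV ζ ψ (π i)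

/-- The path `π 0, …, π n` is permitted: any two distinct heavy vertices on it have
different first coordinates. -/
def IsPermitted (ψ : ℕ → ℕ) (π : ℕ → ℕ × ℕ) (n : ℕ) : Prop :=
  ∀ i ≤ n, ∀ j ≤ n, π i ≠ π j → Heavy ψ (π i) → Heavy ψ (π j) → (π i).1 ≠ (π j).1

/-- There is an infinite open permitted oriented path starting from the origin in the
percolation configuration `ω_{ζ,ψ}`. -/
def InfOpenPermitted (ζ ψ : ℕ → ℕ) : Prop :=
  ∃ π : ℕ → ℕ × ℕ, π 0 = (0, 0) ∧ (∀ n, IsStep (π n) (π (n + 1))) ∧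
    (∀ n, OpenV ζ ψ (π n)) ∧
    ∀ i j, π i ≠ π j → Heavy ψ (π i) → Heavy ψ (π j) → (π i).1 ≠ (π j).1

/-- `V_{⟨ζ,ψ⟩}(c)`: vertices in row `c` reachable from the origin by an open permitted
oriented path. -/
def Vset (ζ ψ : ℕ → ℕ) (c : ℕ) : Set (ℕ × ℕ) :=
  {v | v.2 = c ∧ ∃ (π : ℕ → ℕ × ℕ) (n : ℕ), π 0 = (0, 0) ∧ π n = v ∧
    IsOpenPath ζ ψ π n ∧ IsPermitted ψ π n}

/-- The open oriented cluster of the origin in `ω_{ζ,ψ}`. -/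
def ClusterO (ζ ψ : ℕ → ℕ) : Set (ℕ × ℕ) :=
  {v | ∃ (π : ℕ → ℕ × ℕ) (n : ℕ), π 0 = (0, 0) ∧ π n = v ∧ IsOpenPath ζ ψ π n}

/-- The horizontal slab `S_{[a,b]}`. -/
def Slab (a b : ℕ) : Set (ℕ × ℕ) := {v | a ≤ v.2 ∧ v.2 ≤ b}

/-- The horizontal discrete segment in row `c` with endpoints `a` and `b`. -/
def HSeg (c a b : ℕ) : Set (ℕ × ℕ) := {v | v.2 = c ∧ a ≤ v.1 ∧ v.1 ≤ b}

/-- The shift `θ_m`. -/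
def shiftSeq (m : ℕ) (ψ : ℕ → ℕ) : ℕ → ℕ := fun j => ψ (j + m)

/-- The hierarchical weighted word `ζ(L)`: the letter at the paper's position
`j ≥ 1` (Lean index `j - 1`) has weight `k` iff `L^k ∣ j` and `L^{k+1} ∤ j`. -/
noncomputable def zetaL (L : ℕ) : ℕ → ℕ := fun j => sSup {k | L ^ k ∣ j + 1}

/-- Lean indices at which `ψ` has an entry `≥ k`. -/
def idxSet (ψ : ℕ → ℕ) (k : ℕ) : Set ℕ := {n | k ≤ ψ n}

/-- `i_k(ψ)`: the first (1-based, as in the paper) position at which `ψ` has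
an entry `≥ k` (meaningful when `idxSet ψ k` is nonempty). -/
noncomputable def idx (ψ : ℕ → ℕ) (k : ℕ) : ℕ := sInf (idxSet ψ k) + 1

/-- Condition a) of being `M`-spaced. -/
def CondA (M : ℕ) (ψ : ℕ → ℕ) : Prop := ∀ i j : ℕ, i < j → M ^ min (ψ i) (ψ j) ≤ j - i

/-- `ψ ∈ Ψ_M^k` : `ψ` is `M`-spaced up to level `k`. -/
def SpacedUpTo (M k : ℕ) (ψ : ℕ → ℕ) : Prop :=
  Psi ψ ∧ CondA M ψ ∧ ∀ j, 1 ≤ j → j ≤ k → (idxSet ψ j).Nonempty → M ^ j ≤ idx ψ j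

/-- `ψ ∈ Ψ_M` : `ψ` is `M`-spaced. -/
def Spaced (M : ℕ) (ψ : ℕ → ℕ) : Prop :=
  Psi ψ ∧ CondA M ψ ∧ ∀ j, 1 ≤ j → (idxSet ψ j).Nonempty → M ^ j ≤ idx ψ j

/-! ### Discrete Hausdorff dimension (Barlow–Taylor) -/

/-- `ν_α(A, F)` with the normalizing diameter `dF` of `F` given explicitly; the
infimum is over countable covers of `A ∩ F` by integer intervals `[x, y)`. -/
noncomputable def nuBT (α : ℝ) (A F : Set ℤ) (dF : ℝ) : ℝ≥0∞ :=
  (⨅ (B : ℕ → ℤ × ℤ) (_ : A ∩ F ⊆ ⋃ i, Set.Ico (B i).1 (B i).2),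
      ∑' i, ENNReal.ofReal ((((B i).2 - (B i).1 : ℤ)) : ℝ) ^ α) /
    ENNReal.ofReal dF ^ α

/-- The annulus `I_n^{(r)}` (for `n ≥ 1`). -/
noncomputable def ringBT (r n : ℕ) : Set ℤ :=
  if n = 1 then Set.Ico (-(r : ℤ)) (r : ℤ)
  else Set.Ico (-((r : ℤ) ^ n)) ((r : ℤ) ^ n) \ Set.Ico (-((r : ℤ) ^ (n - 1))) ((r : ℤ) ^ (n - 1))

/-- `m_α^{(r)}(A) = ∑_{n ≥ 1} ν_α(A, I_n^{(r)})`. -/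
noncomputable def mBT (r : ℕ) (α : ℝ) (A : Set ℤ) : ℝ≥0∞ :=
  ∑' n : ℕ, nuBT α A (ringBT r (n + 1)) (2 * (r : ℝ) ^ (n + 1))

/-- The discrete (Barlow–Taylor) Hausdorff dimension of `A ⊆ ℤ`. -/
noncomputable def dimBT (r : ℕ) (A : Set ℤ) : ℝ :=
  sInf {α : ℝ | 0 < α ∧ mBT r α A < ⊤}

/-- The set of zeroes of a binary sequence, viewed inside `ℤ` (at the paper's
positions `1, 2, …`). -/
def zeroSetZ (η : ℕ → Bool) : Set ℤ := {i : ℤ | ∃ n : ℕ, i = (n : ℤ) + 1 ∧ η n = false}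

/-! ### The grouping construction -/

/-- A cluster together with its mass. -/
abbrev Clu : Type := Set ℕ × ℕ

/-- The set of (paper, i.e. 1-based) positions of the ones of `ξ`. -/
def Gamma (ξ : ℕ → Bool) : Set ℕ := {n | 1 ≤ n ∧ ξ (n - 1) = true}

/-- The span of a set: the smallest interval containing it. -/
noncomputable def spanI (C : Set ℕ) : Set ℕ := Set.Icc (sInf C) (sSup C)

/-- Euclidean distance between two sets of integers. -/
noncomputable def cluDist (C D : Set ℕ) : ℕ := sInf {d | ∃ a ∈ C, ∃ b ∈ D, d = Nat.dist a b}

/-- Diameter of a set of integers. -/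
noncomputable def sdiam (C : Set ℕ) : ℕ := sSup {d | ∃ a ∈ C, ∃ b ∈ C, d = Nat.dist a b}

/-- `C` lies entirely to the left of `D`. -/
def cluLT (C D : Set ℕ) : Prop := ∀ a ∈ C, ∀ b ∈ D, a < b

/-- `p` and `q` are adjacent clusters of the collection `B` (no cluster of `B` lies
strictly between them) at distance `< t`. -/
def adjStep (B : Set Clu) (t : ℕ) (p q : Clu) : Prop :=
  p ∈ B ∧ q ∈ B ∧ cluDist p.1 q.1 < t ∧
    ((cluLT p.1 q.1 ∧ ∀ r ∈ B, ¬(cluLT p.1 r.1 ∧ cluLT r.1 q.1)) ∨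
      (cluLT q.1 p.1 ∧ ∀ r ∈ B, ¬(cluLT q.1 r.1 ∧ cluLT r.1 p.1)))

/-- The maximal run (within the collection `B`, with gap threshold `t`) containing `p`. -/
def runOf (B : Set Clu) (t : ℕ) (p : Clu) : Set Clu :=
  {q ∈ B | Relation.ReflTransGen (adjStep B t) p q}

/-- `R` is a maximal run of length `≥ 2` of clusters of `B` with gap threshold `t`. -/
def IsRun (B : Set Clu) (t : ℕ) (R : Set Clu) : Prop :=
  ∃ p ∈ B, R = runOf B t p ∧ ∃ q ∈ R, q ≠ p

/-- The level-`(k+1)` cluster created from a maximal `(k+1)`-run `R`: its point set is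
`span(R) ∩ Γ`, and its mass is `∑ m(constituents) - k (n - 1)`. -/
noncomputable def runClu (Γ : Set ℕ) (k : ℕ) (R : Set Clu) : Clu :=
  (spanI (⋃ q ∈ R, q.1) ∩ Γ, (∑ᶠ q ∈ R, q.2) - k * (Nat.card R - 1))

/-- One step of the grouping construction: from the partition `𝐂_k` to `𝐂_{k+1}`. -/
noncomputable def nextPart (Γ : Set ℕ) (M k : ℕ) (S : Set Clu) : Set Clu :=
  {c | ∃ R, IsRun {q ∈ S | k + 1 ≤ q.2} (M ^ (k + 1)) R ∧ c = runClu Γ k R} ∪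
    {c ∈ S | ∀ R, IsRun {q ∈ S | k + 1 ≤ q.2} (M ^ (k + 1)) R →
      Disjoint c.1 (spanI (⋃ q ∈ R, q.1))}

/-- The partition `𝐂_k` of `Γ` into clusters with masses (grouping construction with
spacing parameter `M`). -/
noncomputable def parts (Γ : Set ℕ) (M : ℕ) : ℕ → Set Clu
  | 0 => {c | ∃ x ∈ Γ, c = ({x}, 1)}
  | k + 1 => nextPart Γ M k (parts Γ M k)

/-- `c` is a cluster of level `ℓ`: it appears in `𝐂_ℓ` and in no earlier partition. -/
def IsLevelCluster (Γ : Set ℕ) (M ℓ : ℕ) (c : Clu) : Prop :=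
  c ∈ parts Γ M ℓ ∧ ∀ k < ℓ, c ∉ parts Γ M k

/-- `κ(x) < ∞` : the levels of the clusters containing `x` are bounded. -/
def KappaFinite (Γ : Set ℕ) (M : ℕ) (x : ℕ) : Prop :=
  BddAbove {ℓ | ∃ c : Clu, IsLevelCluster Γ M ℓ c ∧ x ∈ c.1}

/-- The event `Ξ(p)` on which the grouping construction is well set:
`κ(x) < ∞` for every `x ∈ Γ(ξ)`. -/
def GoodSeq (M : ℕ) (ξ : ℕ → Bool) : Prop := ∀ x ∈ Gamma ξ, KappaFinite (Gamma ξ) M x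

/-- The collection `𝐂_∞` of maximal clusters: those that stay in `𝐂_k` forever. -/
def maxClusters (Γ : Set ℕ) (M : ℕ) : Set Clu :=
  {c | ∃ ℓ, ∀ k, ℓ ≤ k → c ∈ parts Γ M k}

/-- The defining condition of `χ(ξ) ≤ k` : every maximal cluster of mass `> k`
is at distance `≥ M^{mass}` from the origin.  (Positions are 1-based, so the distance
from a cluster to `0` is its smallest element.) -/
def ChiCond (Γ : Set ℕ) (M k : ℕ) : Prop :=
  ∀ c ∈ maxClusters Γ M, k < c.2 → M ^ c.2 ≤ sInf c.1

/-- The maximal cluster containing a given point (junk if there is none). -/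
noncomputable def maxCluOf (Γ : Set ℕ) (M : ℕ) (x : ℕ) : Clu :=
  letI := Classical.dec (∃ c : Clu, c ∈ maxClusters Γ M ∧ x ∈ c.1)
  if h : ∃ c : Clu, c ∈ maxClusters Γ M ∧ x ∈ c.1 then h.choose else (∅, 0)

/-- Enumeration of the maximal clusters in increasing order, together with the union
of those already enumerated. -/
noncomputable def enumAux (Γ : Set ℕ) (M : ℕ) : ℕ → Clu × Set ℕ
  | 0 => (maxCluOf Γ M (sInf Γ), (maxCluOf Γ M (sInf Γ)).1)
  | j + 1 =>
    (maxCluOf Γ M (sInf (Γ \ (enumAux Γ M j).2)),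
      (enumAux Γ M j).2 ∪ (maxCluOf Γ M (sInf (Γ \ (enumAux Γ M j).2))).1)

/-- The `j`-th maximal cluster `C_{∞,j}` (`j` is 0-based here). -/
noncomputable def enumClu (Γ : Set ℕ) (M : ℕ) (j : ℕ) : Clu := (enumAux Γ M j).1

/-- The start-point `x̂_j` of the `j`-th maximal cluster (`j` is 0-based here). -/
noncomputable def hatx (Γ : Set ℕ) (M : ℕ) : ℕ → ℕ
  | 0 => sInf Γ
  | j + 1 => sInf (Γ \ (enumAux Γ M j).2)

/-- The (1-based) position `x̂_j - ∑_{t<j} diam(C_{∞,t})` at which the entry of the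
`j`-th maximal cluster sits in the weighted word `ψ^ξ`. -/
noncomputable def cluPos (Γ : Set ℕ) (M : ℕ) (j : ℕ) : ℕ :=
  hatx Γ M j - ∑ t ∈ Finset.range j, sdiam (enumClu Γ M t).1

/-- The weighted word `ψ^ξ` associated to `ξ` by the grouping construction. -/
noncomputable def psiXi (M : ℕ) (ξ : ℕ → Bool) : ℕ → ℕ := fun i =>
  letI := Classical.dec (∃ j : ℕ, i + 1 = cluPos (Gamma ξ) M j)
  if h : ∃ j : ℕ, i + 1 = cluPos (Gamma ξ) M j then (enumClu (Gamma ξ) M h.choose).2 else 0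

/-- `ψ ⪯_M ζ`. -/
def PrecM (M : ℕ) (ψ ζ : ℕ → ℕ) : Prop :=
  ∀ j, (ψ j = 0 ↔ ζ j = 0) ∧ (1 ≤ ψ j → ψ j ≤ ζ j ∧ ζ j ≤ 3 * M ^ (ψ j - 1))

/-- The set `∪_i (span(C_{∞,i}) \ C_{∞,i})` of points to be deleted. -/
def Dset (Γ : Set ℕ) (M : ℕ) : Set ℕ := ⋃ c ∈ maxClusters Γ M, spanI c.1 \ c.1

/-- `j_n(ξ)` : the `n`-th (0-based) element of `Dset`, shifted by `n` to account for
the previous deletions (this is the paper's `j_{n+1}`, a 1-based position). -/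
noncomputable def jseq (Γ : Set ℕ) (M : ℕ) (n : ℕ) : ℕ := Nat.nth (· ∈ Dset Γ M) n - n

/-- The iterates `ξ^{(n)}` obtained by successively deleting the zeroes of `ξ`
lying inside spans of maximal clusters. -/
noncomputable def xiIter (M : ℕ) (ξ : ℕ → Bool) : ℕ → ℕ → Bool
  | 0 => ξ
  | n + 1 => delta0 (xiIter M ξ n) (jseq (Gamma ξ) M n - 1)

/-- The fattened hierarchical weighted word `ζ̃(L)` (with `M = 3(L+1)`). -/
noncomputable def tzeta (L : ℕ) : ℕ → ℕ := fun j =>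
  if zetaL L j = 0 then 0 else 3 * (3 * (L + 1)) ^ (zetaL L j - 1)

/-- `|A ∩ [0, n)|` for `A ⊆ ℕ`. -/
noncomputable def massCount (A : Set ℕ) (n : ℕ) : ℕ := Nat.card {a : ℕ | a ∈ A ∧ a < n}

/-!
Cut `η` into the blocks `1^α 0`. A block absorbs every segment of `ξ` that ends in a zero and
contains at most `α` ones, so `η` and `ξ` are compatible as soon as `ξ` can be cut into segments
that obey the capacities of the successive blocks.

The ones of `ξ` are organised in levels: a point of level `k` has level `k + 1` if there is another
point of level `k` outside of its cluster but within distance `b k`. Thus the clusters of the points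
whose level is exactly `k` are short and far apart. The blocks of `η` whose index is a multiple of a
period `P k` are large enough to jump over such a cluster. Just before the cluster one waits for the
next block of this kind; the wait is short compared with the spacing `b k`, so a route that gets
past the points of levels `< k` still advances by at most `2 ^ k` per block on average, and one can
recurse on `k`.

This works if no point of level `k` lies in `[0, b k)`, for every `k`. A point of level `k` needs
`2 ^ k` ones at distinct positions. For `b k = c * M ^ k` this makes the expected number of points
of level `k` in `[0, b k)` at most `(2 * M * c * p) ^ (2 ^ k)`, which is summable. Starting `ξ` with
a long run of zeroes takes care of the first levels, and the union bound of the others.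
-/

/-! ### Compatibility of finite prefixes -/

/-- The sequence `a, s 0, s 1, …`. -/
def consSeq {α : Type*} (a : α) (s : ℕ → α) : ℕ → α
  | 0 => a
  | j + 1 => s j

/-- The sequence `s n, s (n + 1), …`. -/
def dropSeq {α : Type*} (n : ℕ) (s : ℕ → α) : ℕ → α := fun j => s (j + n)

lemma consSeq_head_tail {α : Type*} (s : ℕ → α) : consSeq (s 0) (dropSeq 1 s) = s := by
  funext j
  cases j <;> rfl

lemma deleteAt_consSeq_zero {α : Type*} (a : α) (s : ℕ → α) : deleteAt (consSeq a s) 0 = s := by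
  funext j
  simp [deleteAt, consSeq]

lemma deleteAt_consSeq_succ {α : Type*} (a : α) (s : ℕ → α) (i : ℕ) :
    deleteAt (consSeq a s) (i + 1) = consSeq a (deleteAt s i) := by
  funext j
  cases j <;> simp [deleteAt, consSeq]

/-- One application of an operator `Δ_·^c`; the steps of `Reach0` and `Reach1` are the cases
`c = false` and `c = true`. -/
def AnnihilatesTo (c : Bool) (s t : ℕ → Bool) : Prop :=
  ∃ i, t = if s i = c then deleteAt s i else s

lemma annihilatesTo_consSeq_self (c : Bool) (s : ℕ → Bool) : AnnihilatesTo c (consSeq c s) s :=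
  ⟨0, ((if_pos rfl).trans (deleteAt_consSeq_zero c s)).symm⟩

lemma AnnihilatesTo.consSeq {c : Bool} {s t : ℕ → Bool} (h : AnnihilatesTo c s t) (a : Bool) :
    AnnihilatesTo c (consSeq a s) (consSeq a t) := by
  obtain ⟨i, rfl⟩ := h
  refine ⟨i + 1, ?_⟩
  rw [deleteAt_consSeq_succ, apply_ite (Paper.consSeq a)]
  rfl

/-- One can delete ones from `s` and zeroes from `t` so that the first `N` digits agree. -/
def PrefixCompatible (N : ℕ) (s t : ℕ → Bool) : Prop :=
  ∃ s' t', Reach1 s s' ∧ Reach0 t t' ∧ ∀ i < N, s' i = t' i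

/-- A subsequence of the thinned sequences converges by compactness of `{0,1}^ℕ`. -/
lemma compatible_of_forall_prefixCompatible {η ξ : ℕ → Bool}
    (h : ∀ N, PrefixCompatible N η ξ) : Compatible η ξ := by
  choose s t hs ht hst using h
  obtain ⟨l, φ, hφ, hl⟩ := CompactSpace.tendsto_subseq s
  refine ⟨s ∘ φ, t ∘ φ, l, fun k => hs _, fun k => ht _, hl, ?_⟩
  rw [tendsto_pi_nhds] at hl ⊢
  refine fun i => (hl i).congr' ?_
  filter_upwards [eventually_gt_atTop i] with N hN
  exact hst (φ N) i (hN.trans_le hφ.le_apply)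

namespace PrefixCompatible

variable {N : ℕ} {s t : ℕ → Bool}

lemma zero (s t : ℕ → Bool) : PrefixCompatible 0 s t :=
  ⟨s, t, .refl, .refl, by simp⟩

lemma mono {N' : ℕ} (h : PrefixCompatible N' s t) (hN : N ≤ N') : PrefixCompatible N s t := by
  obtain ⟨s', t', hs, ht, hst⟩ := h
  exact ⟨s', t', hs, ht, fun i hi => hst i (hi.trans_le hN)⟩

lemma consSeq (h : PrefixCompatible N s t) (a : Bool) :
    PrefixCompatible (N + 1) (consSeq a s) (consSeq a t) := by
  obtain ⟨s', t', hs, ht, hst⟩ := h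
  refine ⟨Paper.consSeq a s', Paper.consSeq a t',
    Relation.ReflTransGen.lift (Paper.consSeq a)
      (fun _ _ (h : AnnihilatesTo true _ _) => h.consSeq a) _ _ hs,
    Relation.ReflTransGen.lift (Paper.consSeq a)
      (fun _ _ (h : AnnihilatesTo false _ _) => h.consSeq a) _ _ ht, ?_⟩
  rintro (_ | i) hi
  · rfl
  · exact hst i (Nat.succ_lt_succ_iff.mp hi)

lemma consSeq_true_left (h : PrefixCompatible N s t) :
    PrefixCompatible N (Paper.consSeq true s) t := by
  obtain ⟨s', t', hs, ht, hst⟩ := h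
  exact ⟨s', t', .head (annihilatesTo_consSeq_self true s) hs, ht, hst⟩

lemma consSeq_false_right (h : PrefixCompatible N s t) :
    PrefixCompatible N s (Paper.consSeq false t) := by
  obtain ⟨s', t', hs, ht, hst⟩ := h
  exact ⟨s', t', hs, .head (annihilatesTo_consSeq_self false t) ht, hst⟩

/-- Greedy matching: a block `1^α 0` of `s` absorbs a block of `t` that ends in a zero and
contains at most `α` ones. -/
lemma of_block {α d : ℕ} (hs : ∀ j < α, s j = true) (hsα : s α = false) (ht : t d = false)
    (hcount : Nat.count (t · = true) d ≤ α)
    (h : PrefixCompatible N (dropSeq (α + 1) s) (dropSeq (d + 1) t)) :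
    PrefixCompatible (N + 1) s t := by
  induction d generalizing α s t with
  | zero =>
    induction α generalizing s with
    | zero =>
      rw [← consSeq_head_tail s, ← consSeq_head_tail t, hsα, ht]
      exact h.consSeq false
    | succ α ih =>
      rw [← consSeq_head_tail s, hs 0 α.succ_pos]
      exact (ih (fun j hj => hs (j + 1) (Nat.succ_lt_succ hj)) hsα (by simp) h).consSeq_true_left
  | succ d ih =>
    rw [Nat.count_succ'] at hcount
    cases ht0 : t 0 with
    | false =>
      rw [← consSeq_head_tail t, ht0]
      exact (ih (t := dropSeq 1 t) hs hsα ht ((Nat.le_add_right _ _).trans hcount)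
        h).consSeq_false_right
    | true =>
      obtain _ | α := α
      · simp [ht0] at hcount
      rw [← consSeq_head_tail s, ← consSeq_head_tail t, hs 0 α.succ_pos, ht0]
      refine ((ih (s := dropSeq 1 s) (t := dropSeq 1 t)
        (fun j hj => hs (j + 1) (Nat.succ_lt_succ hj)) hsα ht ?_ h).consSeq true).mono (by omega)
      simp only [ht0, if_true] at hcount
      convert Nat.le_of_add_le_add_right hcount
      rfl

end PrefixCompatible

/-! ### Blocks and jumps -/

/-- The number of points of `S` in `[x, y)`. -/
noncomputable def countIn (S : Set ℕ) (x y : ℕ) : ℕ := (S ∩ Set.Ico x y).ncard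

lemma countIn_le (S : Set ℕ) (x y : ℕ) : countIn S x y ≤ y - x := by
  refine (Set.ncard_le_ncard Set.inter_subset_right).trans ?_
  rw [← Finset.coe_Ico, Set.ncard_coe_finset, Nat.card_Ico]

lemma countIn_le_add_of_subset {S T U : Set ℕ} (h : S ⊆ T ∪ U) (x y : ℕ) :
    countIn S x y ≤ countIn T x y + countIn U x y := by
  refine (Set.ncard_le_ncard ?_).trans (Set.ncard_union_le _ _)
  rw [← Set.union_inter_distrib_right]
  exact Set.inter_subset_inter_left _ h

lemma countIn_le_add (S : Set ℕ) (x y z : ℕ) :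
    countIn S x z ≤ countIn S x y + countIn S y z := by
  refine (Set.ncard_le_ncard ?_).trans (Set.ncard_union_le _ _)
  rw [← Set.inter_union_distrib_left]
  exact Set.inter_subset_inter_right _ Set.Ico_subset_Ico_union_Ico

lemma count_add_eq_countIn (S : Set ℕ) [DecidablePred (· ∈ S)] (x d : ℕ) :
    Nat.count (· + x ∈ S) d = countIn S x (x + d) := by
  rw [Nat.count_eq_card_filter_range, ← Set.ncard_coe_finset, countIn,
    ← Set.ncard_image_of_injective _ (add_left_injective x)]
  congr 1
  ext i
  simp only [Finset.coe_filter, Finset.mem_range, Set.mem_image, Set.mem_ofPred_eq,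
    Set.mem_inter_iff, Set.mem_Ico]
  constructor
  · rintro ⟨j, ⟨hj, hjS⟩, rfl⟩
    exact ⟨hjS, by omega, by omega⟩
  · rintro ⟨hi, hxi, hid⟩
    exact ⟨i - x, ⟨by omega, by rwa [Nat.sub_add_cancel hxi]⟩, Nat.sub_add_cancel hxi⟩

/-- `[x, y)` is a segment of `ξ` that ends in a zero and contains at most `c` ones: by
`PrefixCompatible.of_block` it can be matched with a block `1^c 0`. -/
def IsJump (c : ℕ) (ξ : ℕ → Bool) (x y : ℕ) : Prop :=
  x < y ∧ ξ (y - 1) = false ∧ countIn {i | ξ i = true} x y ≤ c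

/-- The start of the `i`-th block of `η`, where the blocks of `η` are the words `1^α 0`, `0 ≤ α`,
into which it is cut by its zeroes. -/
noncomputable def blockStart (η : ℕ → Bool) : ℕ → ℕ
  | 0 => 0
  | i + 1 => blockStart η i + runLen η (blockStart η i) + 1

/-- The number of ones in the `i`-th block of `η`. -/
noncomputable def blockLen (η : ℕ → Bool) (i : ℕ) : ℕ := runLen η (blockStart η i)

lemma runLen_spec {η : ℕ → Bool} {m : ℕ} (h : ∃ k, η (m + k) = false) :
    η (m + runLen η m) = false ∧ ∀ j < runLen η m, η (m + j) = true := by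
  classical
  have e : runLen η m = Nat.find h := by
    rw [runLen, dif_pos h]
  rw [e]
  exact ⟨Nat.find_spec h, fun j hj => by simpa using Nat.find_min h hj⟩

lemma prefixCompatible_of_isJump {η ξ : ℕ → Bool} (hη : ∀ n, ∃ m, n ≤ m ∧ η m = false)
    {N m : ℕ} {X : ℕ → ℕ} (hX : ∀ i < N, IsJump (blockLen η (m + i)) ξ (X i) (X (i + 1))) :
    PrefixCompatible N (dropSeq (blockStart η m) η) (dropSeq (X 0) ξ) := by
  induction N generalizing m X with
  | zero => exact .zero _ _
  | succ N ih =>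
    obtain ⟨hlt, hzero, hcount⟩ := hX 0 N.succ_pos
    simp only [zero_add, add_zero] at hlt hzero hcount
    obtain ⟨d, hd⟩ : ∃ d, X 1 = X 0 + d + 1 := ⟨X 1 - X 0 - 1, by omega⟩
    have hrest : PrefixCompatible N (dropSeq (blockStart η (m + 1)) η) (dropSeq (X 1) ξ) :=
      ih (X := fun i => X (i + 1)) fun i hi => by
        simpa only [add_assoc, add_comm 1 i] using hX (i + 1) (Nat.succ_lt_succ hi)
    have hblock : ∃ k, η (blockStart η m + k) = false := by
      obtain ⟨j, hj, hj0⟩ := hη (blockStart η m)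
      exact ⟨j - blockStart η m, by rwa [Nat.add_sub_cancel' hj]⟩
    obtain ⟨hη0, hη1⟩ := runLen_spec hblock
    simp only [hd, Nat.add_sub_cancel] at hzero hcount
    refine PrefixCompatible.of_block (α := blockLen η m) (d := d) ?_ ?_ ?_ ?_ ?_
    · exact fun j hj => by rw [dropSeq, add_comm]; exact hη1 j hj
    · rw [dropSeq, add_comm]; exact hη0
    · rwa [dropSeq, add_comm]
    · refine le_trans (Eq.le (count_add_eq_countIn {i | ξ i = true} (X 0) d)) (le_trans ?_ hcount)
      exact Set.ncard_le_ncard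
        (Set.inter_subset_inter_right _ (Set.Ico_subset_Ico_right (Nat.le_succ _)))
    · convert hrest using 1
      · funext j
        simp only [dropSeq, blockStart, blockLen]; congr 1; omega
      · funext j
        simp only [dropSeq, hd]; congr 1; omega

/-! ### Hierarchical exceptional sets -/

/-- The diameter allowed for a cluster of points of level `k`, for separation scales `b`. -/
def clusterDiam (b : ℕ → ℕ) : ℕ → ℕ
  | 0 => 0
  | k + 1 => clusterDiam b k + 2 * b k

/-- The distance within which one can step over a cluster of level `k` and land in a place that
is free of points of all levels `≤ k`, see `exists_landing`. -/
def clearance (b : ℕ → ℕ) : ℕ → ℕ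
  | 0 => 2
  | k + 1 => clearance b k + clusterDiam b (k + 1)

lemma two_le_clearance (b : ℕ → ℕ) (k : ℕ) : 2 ≤ clearance b k := by
  induction k with
  | zero => exact le_rfl
  | succ k ih => exact ih.trans (Nat.le_add_right _ _)

/-- The ones of `ξ` that are exceptional up to level `k`: a point of level `k` has level `k + 1`
if there is another point of level `k` outside of its cluster but at distance at most `b k`. -/
def exceptional (b : ℕ → ℕ) (ξ : ℕ → Bool) : ℕ → Set ℕ
  | 0 => {x | ξ x = true}
  | k + 1 => {x ∈ exceptional b ξ k |
      ∃ y ∈ exceptional b ξ k, Nat.dist x y ∈ Set.Ioc (clusterDiam b k) (b k)}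

section Exceptional

variable {b : ℕ → ℕ} {ξ : ℕ → Bool} {j k : ℕ}

lemma mem_exceptional_succ_of_lt {x y : ℕ} (hx : x ∈ exceptional b ξ k)
    (hy : y ∈ exceptional b ξ k) (hlt : x + clusterDiam b k < y) (hle : y ≤ x + b k) :
    x ∈ exceptional b ξ (k + 1) ∧ y ∈ exceptional b ξ (k + 1) := by
  have hxy : Nat.dist x y = y - x := Nat.dist_eq_sub_of_le (by omega)
  exact ⟨⟨hx, y, hy, by rw [hxy, Set.mem_Ioc]; omega⟩,
    hy, x, hx, by rw [Nat.dist_comm, hxy, Set.mem_Ioc]; omega⟩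

lemma exists_last_near {S : Set ℕ} {z : ℕ} (hz : z ∈ S) (a : ℕ) :
    ∃ u ∈ S, z ≤ u ∧ u ≤ z + a ∧ ∀ w ∈ S, u < w → z + a < w := by
  obtain ⟨u, ⟨huS, hzu, hua⟩, hmax⟩ := Set.exists_max_image (S ∩ Set.Icc z (z + a)) id
    ((Set.finite_Icc _ _).inter_of_right S) ⟨z, hz, le_rfl, Nat.le_add_right _ _⟩
  refine ⟨u, huS, hzu, hua, fun w hw huw => ?_⟩
  by_contra! hwa
  exact (hmax w ⟨hw, hzu.trans huw.le, hwa⟩).not_gt huw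

/-- The last point `u` of the cluster of `z` satisfies the hypothesis one level further down,
because a point that violates it would itself have level `k` and lie in the gap after `z`. -/
lemma exists_landing (hb : ∀ k, clusterDiam b (k + 1) + b k ≤ b (k + 1)) {z : ℕ}
    (hz : z ∈ exceptional b ξ k)
    (hgap : ∀ w ∈ exceptional b ξ k, z + clusterDiam b k < w → z + b k < w) :
    ∃ v, z + 2 ≤ v ∧ v ≤ z + clearance b k ∧
      ∀ j ≤ k, ∀ w ∈ exceptional b ξ j, v ≤ w + 1 → v + b j < w + clearance b j := by
  induction k generalizing z with
  | zero =>
    refine ⟨z + 2, le_rfl, le_rfl, fun j hj w hw hvw => ?_⟩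
    obtain rfl : j = 0 := Nat.le_zero.mp hj
    have := hgap w hw (by rw [clusterDiam]; omega)
    rw [clearance]; omega
  | succ k ih =>
    obtain ⟨u, hu, hzu, huz, hlast⟩ := exists_last_near hz (clusterDiam b (k + 1))
    have hjump : ∀ w ∈ exceptional b ξ (k + 1), u < w → z + b (k + 1) < w :=
      fun w hw huw => hgap w hw (hlast w hw huw)
    obtain ⟨v, huv, hvu, hv⟩ := ih hu.1 fun w hw huw => by
      by_contra! hwu
      have := hjump w (mem_exceptional_succ_of_lt hu.1 hw huw hwu).2 (by omega)
      have := hb k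
      omega
    refine ⟨v, by omega, by rw [clearance]; omega, fun j hj w hw hvw => ?_⟩
    obtain rfl | hj := hj.eq_or_lt
    · have := hjump w hw (by omega)
      rw [clearance]; omega
    · exact hv j (Nat.lt_succ_iff.mp hj) w hw hvw

lemma countIn_diff_le {x y : ℕ} (h : y ≤ x + b j) :
    countIn (exceptional b ξ j \ exceptional b ξ (j + 1)) x y ≤ clusterDiam b j + 1 := by
  set S := (exceptional b ξ j \ exceptional b ξ (j + 1)) ∩ Set.Ico x y with hS
  obtain hS0 | hS0 := S.eq_empty_or_nonempty
  · simp [countIn, ← hS, hS0]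
  obtain ⟨u, ⟨⟨hu, hu'⟩, hxu, -⟩, hmin⟩ :=
    Set.exists_min_image S id ((Set.finite_Ico x y).inter_of_right _) hS0
  have hsub : S ⊆ Set.Icc u (u + clusterDiam b j) := by
    refine fun w hw => ⟨hmin w hw, ?_⟩
    by_contra! huw
    exact hu' (mem_exceptional_succ_of_lt hu hw.1.1 huw (by have := hw.2.2; omega)).1
  refine (Set.ncard_le_ncard hsub (Set.finite_Icc _ _)).trans ?_
  rw [← Finset.coe_Icc, Set.ncard_coe_finset, Nat.card_Icc]
  omega

lemma countIn_diff_le_mul {x y : ℕ} (q : ℕ) (h : y ≤ x + b j * (q + 1)) :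
    countIn (exceptional b ξ j \ exceptional b ξ (j + 1)) x y ≤
      (q + 1) * (clusterDiam b j + 1) := by
  induction q generalizing x with
  | zero => simpa using countIn_diff_le (by simpa using h)
  | succ q ih =>
    calc countIn (exceptional b ξ j \ exceptional b ξ (j + 1)) x y
        ≤ (clusterDiam b j + 1) + (q + 1) * (clusterDiam b j + 1) :=
          (countIn_le_add _ x (x + b j) y).trans
            (add_le_add (countIn_diff_le le_rfl) (ih (by rw [mul_add] at h; omega)))
      _ = (q + 1 + 1) * (clusterDiam b j + 1) := by ring

lemma countIn_exceptional_le_sum (x y k : ℕ) :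
    countIn (exceptional b ξ 0) x y ≤
      ∑ j ∈ Finset.range k, countIn (exceptional b ξ j \ exceptional b ξ (j + 1)) x y +
        countIn (exceptional b ξ k) x y := by
  induction k with
  | zero => simp
  | succ k ih =>
    have hk := countIn_le_add_of_subset
      (Set.subset_sdiff_union (exceptional b ξ k) (exceptional b ξ (k + 1))) x y
    rw [Finset.sum_range_succ]
    omega

lemma countIn_ones_le (hb : ∀ j, 0 < b j) {x y ℓ : ℕ} (hℓ : y ≤ x + ℓ)
    (hfree : ∀ w ∈ exceptional b ξ k, x ≤ w → y ≤ w) :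
    countIn {i | ξ i = true} x y ≤
      ∑ j ∈ Finset.range k, (ℓ / b j + 1) * (clusterDiam b j + 1) := by
  have hempty : exceptional b ξ k ∩ Set.Ico x y = ∅ :=
    Set.eq_empty_of_forall_notMem fun w hw => (hfree w hw.1 hw.2.1).not_gt hw.2.2
  refine (countIn_exceptional_le_sum (b := b) x y k).trans ?_
  rw [show countIn (exceptional b ξ k) x y = 0 by rw [countIn, hempty, Set.ncard_empty], add_zero]
  refine Finset.sum_le_sum fun j _ => countIn_diff_le_mul _ (hℓ.trans ?_)
  exact Nat.add_le_add_left (Nat.lt_mul_div_succ ℓ (hb j)).le x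

end Exceptional

/-! ### Routes through the exceptional sets -/

/-- The delay that a route of level `k` may accumulate: it is caused by waiting, at each lower
level `j`, for a block whose index is a multiple of `P j`. -/
def delay (b P : ℕ → ℕ) : ℕ → ℕ
  | 0 => 0
  | k + 1 => 2 * delay b P k + 2 ^ k * P k + clearance b k

/-- The relations between separation scales `b`, periods `P` and capacities `c` under which a
sequence of blocks with at least `c k` ones at the multiples of `P k` gets past every obstacle. -/
structure Admissible (b P c : ℕ → ℕ) : Prop where
  lt_period : ∀ k, k < P k
  diam_add_le : ∀ k, clusterDiam b (k + 1) + b k ≤ b (k + 1)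
  le_sep : ∀ k, 2 * clearance b k + 2 * delay b P k + 2 * (2 ^ k * P k) ≤ b k
  le_capacity : ∀ k, ∑ j ∈ Finset.range k, (2 ^ k * P k / b j + 1) * (clusterDiam b j + 1) +
    2 * delay b P k + clearance b k ≤ c k

lemma Admissible.four_le_sep {b P c : ℕ → ℕ} (h : Admissible b P c) (k : ℕ) : 4 ≤ b k := by
  have := h.le_sep k
  have := two_le_clearance b k
  omega

/-- No point of level `< k` lies shortly after `x`. -/
def IsClear (b : ℕ → ℕ) (ξ : ℕ → Bool) (k x : ℕ) : Prop :=
  ∀ j < k, ∀ w ∈ exceptional b ξ j, x ≤ w → x + b j < w + clearance b j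

/-- The jumps `X 0 → X 1 → ⋯ → X C` lead from `x` to `t`, up to a delay, where the `i`-th jump
uses the `(m + i)`-th of the capacities `α`. Up to the delay, the average length of the jumps is
at most `2 ^ k`, over initial as well as over final segments of the route. -/
structure IsRoute (b P α : ℕ → ℕ) (ξ : ℕ → Bool) (k m x t C : ℕ) (X : ℕ → ℕ) : Prop where
  start : X 0 = x
  end_le : X C ≤ t
  le_end : t ≤ X C + delay b P k
  isJump : ∀ i < C, IsJump (α (m + i)) ξ (X i) (X (i + 1))
  le_start_add : ∀ c ≤ C, X c ≤ x + 2 ^ k * c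
  end_le_add : ∀ c ≤ C, X C ≤ X c + 2 ^ k * (C - c) + delay b P k

/-- The jumps `X 0 → ⋯ → X s` lead from `x` to a point shortly before the obstacle `z`, at a
moment when a block of level `k` is about to be used. -/
structure IsApproach (b P α : ℕ → ℕ) (ξ : ℕ → Bool) (k m x z s : ℕ) (X : ℕ → ℕ) : Prop where
  start : X 0 = x
  end_lt : X s < z
  isJump : ∀ i < s, IsJump (α (m + i)) ξ (X i) (X (i + 1))
  le_start_add : ∀ c ≤ s, X c ≤ x + 2 ^ k * c
  obstacle_le : ∀ c ≤ s, z ≤ X c + 2 ^ k * (s - c) + 2 ^ k * P k + 2 * delay b P k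
  landing_le : z + clearance b k ≤ x + 2 ^ (k + 1) * (s + 1)
  pos : 1 ≤ s
  period_dvd : P k ∣ m + s

section Route

variable {b P c α : ℕ → ℕ} {ξ : ℕ → Bool} {k m x z t s C : ℕ} {X : ℕ → ℕ}

lemma IsClear.mono {k' : ℕ} (h : IsClear b ξ k x) (hk : k' ≤ k) : IsClear b ξ k' x :=
  fun j hj => h j (hj.trans_le hk)

lemma le_of_forall_isJump (h : ∀ i < C, IsJump (α (m + i)) ξ (X i) (X (i + 1))) {i j : ℕ}
    (hij : i ≤ j) (hj : j ≤ C) : X i ≤ X j := by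
  induction j, hij using Nat.le_induction with
  | base => exact le_rfl
  | succ j _ ih => exact (ih (by omega)).trans (h j (by omega)).1.le

lemma isRoute_zero (hxt : x ≤ t) (hfree : ∀ w ∈ exceptional b ξ 0, x ≤ w → t < w) :
    IsRoute b P α ξ 0 m x t (t - x) (x + ·) where
  start := rfl
  end_le := by omega
  le_end := by omega
  isJump i hi := by
    have hzero : ∀ w, x ≤ w → w ≤ t → w ∉ exceptional b ξ 0 :=
      fun w hxw hwt hw => (hfree w hw hxw).not_ge hwt
    have hempty : {i | ξ i = true} ∩ Set.Ico (x + i) (x + (i + 1)) = ∅ :=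
      Set.eq_empty_of_forall_notMem fun w ⟨hw, hxw, hwx⟩ => hzero w (by omega) (by omega) hw
    refine ⟨by omega, ?_, by rw [countIn, hempty, Set.ncard_empty]; exact Nat.zero_le _⟩
    exact Bool.eq_false_iff.mpr (hzero _ (by omega) (by omega))
  le_start_add c _ := by simp
  end_le_add c hc := by simp only [pow_zero, one_mul, delay]; omega

lemma IsRoute.succ (h : IsRoute b P α ξ k m x t C X) : IsRoute b P α ξ (k + 1) m x t C X where
  start := h.start
  end_le := h.end_le
  le_end := by
    have := h.le_end
    rw [delay]; omega
  isJump := h.isJump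
  le_start_add c hc := by
    have := h.le_start_add c hc
    rw [pow_succ', mul_assoc]; omega
  end_le_add c hc := by
    have := h.end_le_add c hc
    rw [pow_succ', mul_assoc, delay]; omega

/-- The approach is the part of the route up to the last multiple of the period. -/
lemma IsRoute.exists_isApproach (hA : Admissible b P c) (hxz : x < z)
    (hz : x + b k < z + clearance b k) (h : IsRoute b P α ξ k m x (z - 1) C X) :
    ∃ s, IsApproach b P α ξ k m x z s X := by
  have hP : 0 < P k := (Nat.zero_le k).trans_lt (hA.lt_period k)
  have hsep := hA.le_sep k
  have hend := h.le_end
  have hreach := h.le_start_add C le_rfl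
  have hpow := Nat.two_pow_pos k
  have hPC : P k ≤ C := Nat.le_of_mul_le_mul_left (by omega) hpow
  have hmod := Nat.mod_lt (m + C) hP
  obtain ⟨s, hs⟩ : ∃ s, s + (m + C) % P k = C :=
    ⟨C - (m + C) % P k, Nat.sub_add_cancel (by omega)⟩
  have hfinal : ∀ c ≤ s, 2 ^ k * (C - c) + 2 ^ k ≤ 2 ^ k * (s - c) + 2 ^ k * P k := by
    intro c hc
    rw [← Nat.mul_succ, ← Nat.mul_add]
    exact Nat.mul_le_mul_left _ (by omega)
  have hfinal0 := hfinal 0 (Nat.zero_le s)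
  rw [Nat.sub_zero, Nat.sub_zero] at hfinal0
  refine ⟨s, h.start, ?_, fun i hi => h.isJump i (by omega),
    fun c hc => h.le_start_add c (by omega), fun c hc => ?_, ?_, by omega, ?_⟩
  · have := le_of_forall_isJump h.isJump (show s ≤ C by omega) le_rfl
    have := h.end_le
    omega
  · have := h.end_le_add c (by omega)
    have := hfinal c hc
    omega
  · rw [pow_succ', mul_assoc, mul_add]
    omega
  · rw [show m + s = m + C - (m + C) % P k by omega]
    exact Nat.dvd_sub_mod _

/-- Before the obstacle there are only the ones of lower levels, which are sparse; the capacity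
accounts trivially for the rest of the segment, as its length is at most `2 * delay + clearance`. -/
lemma IsApproach.isJump_crossing (hA : Admissible b P c) (h : IsApproach b P α ξ k m x z s X)
    (hfree : ∀ w ∈ exceptional b ξ k, x ≤ w → z ≤ w) (hα : c k ≤ α (m + s)) {v : ℕ}
    (hzv : z < v) (hvz : v ≤ z + clearance b k) (hv : ξ (v - 1) = false) :
    IsJump (α (m + s)) ξ (X s) v := by
  have hlt := h.end_lt
  have hxs : x ≤ X s := h.start ▸ le_of_forall_isJump h.isJump (Nat.zero_le s) le_rfl
  have hlen := h.obstacle_le s le_rfl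
  rw [Nat.sub_self, mul_zero, add_zero] at hlen
  refine ⟨hlt.trans hzv, hv, le_trans ?_ ((hA.le_capacity k).trans hα)⟩
  have hbefore := countIn_ones_le (ξ := ξ) (k := k) (x := X s) (y := min z (X s + 2 ^ k * P k))
    (fun j => (Nat.zero_lt_succ 3).trans_le (hA.four_le_sep j)) (min_le_right _ _)
    fun w hw hsw => (min_le_left _ _).trans (hfree w hw (hxs.trans hsw))
  have hafter := countIn_le {i | ξ i = true} (min z (X s + 2 ^ k * P k)) v
  have := countIn_le_add {i | ξ i = true} (X s) (min z (X s + 2 ^ k * P k)) v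
  omega

lemma IsApproach.isRoute (h : IsApproach b P α ξ k m x z s X) (hzt : z ≤ t)
    (htz : t < z + clearance b k) : IsRoute b P α ξ (k + 1) m x t s X where
  start := h.start
  end_le := h.end_lt.le.trans hzt
  le_end := by
    have := h.obstacle_le s le_rfl
    rw [Nat.sub_self, mul_zero, add_zero] at this
    rw [delay]; omega
  isJump := h.isJump
  le_start_add c hc := by
    have := h.le_start_add c hc
    rw [pow_succ', mul_assoc]; omega
  end_le_add c hc := by
    have := h.obstacle_le c hc
    have := h.end_lt
    rw [pow_succ', mul_assoc, delay]; omega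

/-- The concatenation of `X 0, …, X s` and `X' 0, X' 1, …`. -/
def splice (s : ℕ) (X X' : ℕ → ℕ) (i : ℕ) : ℕ := if i ≤ s then X i else X' (i - (s + 1))

lemma splice_of_le (X X' : ℕ → ℕ) {i : ℕ} (h : i ≤ s) : splice s X X' i = X i := if_pos h

lemma splice_add (s : ℕ) (X X' : ℕ → ℕ) (i : ℕ) : splice s X X' (s + 1 + i) = X' i := by
  rw [splice, if_neg (by omega), Nat.add_sub_cancel_left]

lemma le_or_eq_succ_add (i s : ℕ) : i ≤ s ∨ ∃ d, i = s + 1 + d :=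
  (le_or_gt i s).imp_right Nat.exists_eq_add_of_le

lemma isJump_splice {X' : ℕ → ℕ} {C' : ℕ}
    (h : ∀ i < s, IsJump (α (m + i)) ξ (X i) (X (i + 1)))
    (hs : IsJump (α (m + s)) ξ (X s) (X' 0))
    (h' : ∀ i < C', IsJump (α (m + s + 1 + i)) ξ (X' i) (X' (i + 1))) :
    ∀ i < s + 1 + C', IsJump (α (m + i)) ξ (splice s X X' i) (splice s X X' (i + 1)) := by
  intro i hi
  obtain hlt | rfl | ⟨d, rfl⟩ : i < s ∨ i = s ∨ ∃ d, i = s + 1 + d :=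
    or_assoc.mp ((le_or_eq_succ_add i s).imp_left Nat.lt_or_eq_of_le)
  · rw [splice_of_le _ _ hlt.le, splice_of_le _ _ hlt]
    exact h i hlt
  · rw [splice_of_le _ _ le_rfl, ← add_zero (i + 1), splice_add]
    exact hs
  · rw [add_assoc (s + 1) d 1, splice_add, splice_add,
      show m + (s + 1 + d) = m + s + 1 + d by omega]
    exact h' d (by omega)

lemma IsApproach.isRoute_splice {X' : ℕ → ℕ} {C' v : ℕ} (h : IsApproach b P α ξ k m x z s X)
    (hvz : v ≤ z + clearance b k) (hjump : IsJump (α (m + s)) ξ (X s) v)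
    (h' : IsRoute b P α ξ (k + 1) (m + s + 1) v t C' X') :
    IsRoute b P α ξ (k + 1) m x t (s + 1 + C') (splice s X X') where
  start := (splice_of_le _ _ (Nat.zero_le s)).trans h.start
  end_le := by rw [splice_add]; exact h'.end_le
  le_end := by rw [splice_add]; exact h'.le_end
  isJump := isJump_splice h.isJump (h'.start.symm ▸ hjump) h'.isJump
  le_start_add c hc := by
    obtain hcs | ⟨d, rfl⟩ := le_or_eq_succ_add c s
    · have := h.le_start_add c hcs
      rw [splice_of_le _ _ hcs, pow_succ', mul_assoc]; omega
    · have := h'.le_start_add d (by omega)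
      have := h.landing_le
      rw [splice_add, mul_add]; omega
  end_le_add c hc := by
    rw [splice_add]
    obtain hcs | ⟨d, rfl⟩ := le_or_eq_succ_add c s
    · have := h'.le_start_add C' le_rfl
      have := h.obstacle_le c hcs
      have hsplit : 2 ^ (k + 1) * (s + 1 + C' - c) =
          2 * (2 ^ k * (s - c)) + 2 * 2 ^ k + 2 ^ (k + 1) * C' := by
        rw [show s + 1 + C' - c = s - c + 1 + C' by omega]; ring
      rw [splice_of_le _ _ hcs, hsplit, delay]; omega
    · have := h'.end_le_add d (by omega)
      rwa [splice_add, Nat.add_sub_add_left]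

lemma exists_isClear_landing (hA : Admissible b P c) (hz : z ∈ exceptional b ξ k)
    (hz' : z ∉ exceptional b ξ (k + 1)) :
    ∃ v, z < v ∧ v ≤ z + clearance b k ∧ ξ (v - 1) = false ∧ IsClear b ξ (k + 1) v := by
  obtain ⟨v, hzv, hvz, hv⟩ := exists_landing hA.diam_add_le hz fun w hw hzw => by
    by_contra! hwz
    exact hz' (mem_exceptional_succ_of_lt hz hw hzw hwz).1
  refine ⟨v, by omega, hvz, Bool.eq_false_iff.mpr fun hone => ?_,
    fun j hj w hw hvw => hv j (Nat.lt_succ_iff.mp hj) w hw (by omega)⟩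
  have := hv 0 (Nat.zero_le k) (v - 1) hone (by omega)
  have := hA.four_le_sep 0
  rw [clearance] at *
  omega

/-- Below the first point `z` of level `k` one follows a route of level `k`; then one uses a block
of level `k` to jump over the cluster of `z`, and continues from the landing point. -/
lemma exists_isRoute_succ (hA : Admissible b P c) (hα : ∀ i, 1 ≤ i → P k ∣ i → c k ≤ α i)
    (hroute : ∀ m x t, IsClear b ξ k x → x ≤ t → (∀ w ∈ exceptional b ξ k, x ≤ w → t < w) →
      ∃ C X, IsRoute b P α ξ k m x t C X)
    (hx : IsClear b ξ (k + 1) x) (hxt : x ≤ t)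
    (hfree : ∀ w ∈ exceptional b ξ (k + 1), x ≤ w → t < w) :
    ∃ C X, IsRoute b P α ξ (k + 1) m x t C X := by
  induction hD : t - x using Nat.strong_induction_on generalizing m x with
  | _ D ih =>
  by_cases hno : ∀ w ∈ exceptional b ξ k, x ≤ w → t < w
  · obtain ⟨C, X, h⟩ := hroute m x t (hx.mono (Nat.le_succ k)) hxt hno
    exact ⟨C, X, h.succ⟩
  obtain ⟨z, ⟨hz, hxz⟩, hzt, hfirst⟩ : ∃ z, (z ∈ exceptional b ξ k ∧ x ≤ z) ∧ z ≤ t ∧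
      ∀ w ∈ exceptional b ξ k, x ≤ w → z ≤ w := by
    classical
    push Not at hno
    obtain ⟨w, hw, hxw, hwt⟩ := hno
    have hex : ∃ w, w ∈ exceptional b ξ k ∧ x ≤ w := ⟨w, hw, hxw⟩
    exact ⟨Nat.find hex, Nat.find_spec hex, (Nat.find_min' hex ⟨hw, hxw⟩).trans hwt,
      fun w hw hxw => Nat.find_min' hex ⟨hw, hxw⟩⟩
  have hsep := hA.le_sep k
  have hxz' := hx k (Nat.lt_succ_self k) z hz hxz
  have hfar : x < z := by have := two_le_clearance b k; omega
  obtain ⟨C, X, h⟩ := hroute m x (z - 1) (hx.mono (Nat.le_succ k)) (by omega)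
    fun w hw hxw => by have := hfirst w hw hxw; omega
  obtain ⟨s, happroach⟩ := h.exists_isApproach hA hfar hxz'
  obtain hlt | hge := lt_or_ge t (z + clearance b k)
  · exact ⟨s, X, happroach.isRoute hzt hlt⟩
  obtain ⟨v, hzv, hvz, hv0, hv⟩ :=
    exists_isClear_landing hA hz fun hz' => (hfree z hz' hxz).not_ge hzt
  obtain ⟨C', X', h'⟩ : ∃ C' X', IsRoute b P α ξ (k + 1) (m + s + 1) v t C' X' :=
    ih (t - v) (by omega) hv (by omega) (fun w hw hvw => hfree w hw (by omega)) rfl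
  have hjump := happroach.isJump_crossing hA hfirst
    (hα (m + s) (by have := happroach.pos; omega) happroach.period_dvd) hzv hvz hv0
  exact ⟨_, _, happroach.isRoute_splice hvz hjump h'⟩

lemma exists_isRoute (hA : Admissible b P c) (hα : ∀ k i, 1 ≤ i → P k ∣ i → c k ≤ α i)
    (hx : IsClear b ξ k x) (hxt : x ≤ t) (hfree : ∀ w ∈ exceptional b ξ k, x ≤ w → t < w) :
    ∃ C X, IsRoute b P α ξ k m x t C X := by
  induction k generalizing m x t with
  | zero => exact ⟨_, _, isRoute_zero hxt hfree⟩
  | succ k ih => exact exists_isRoute_succ hA (hα k) (fun _ _ _ => ih) hx hxt hfree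

lemma compatible_of_blockLen {η : ℕ → Bool} (hA : Admissible b P c)
    (hη : ∀ n, ∃ m, n ≤ m ∧ η m = false)
    (hlen : ∀ k i, 1 ≤ i → P k ∣ i → c k ≤ blockLen η i)
    (hξ : ∀ k, ∀ w ∈ exceptional b ξ k, b k ≤ w) : Compatible η ξ := by
  refine compatible_of_forall_prefixCompatible fun N => ?_
  have hclear : IsClear b ξ N 0 := fun j _ w hw _ => by
    have := hξ j w hw
    have := two_le_clearance b j
    omega
  obtain ⟨C, X, h⟩ := exists_isRoute (m := 0) (t := b N - clearance b N) hA hlen hclear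
    (Nat.zero_le _) fun w hw _ => by
      have := hξ N w hw
      have := two_le_clearance b N
      have := hA.four_le_sep N
      omega
  have hNC : N ≤ C := by
    refine (hA.lt_period N).le.trans (Nat.le_of_mul_le_mul_left ?_ (Nat.two_pow_pos N))
    have := hA.le_sep N
    have := h.le_end
    have := h.le_start_add C le_rfl
    omega
  have hprefix := prefixCompatible_of_isJump hη h.isJump
  rw [h.start] at hprefix
  exact hprefix.mono hNC

end Route

/-! ### Probability of exceptional points -/

/-- The points whose presence at level `k` would make `x` a point of level `k + 1`. -/
def partners (b : ℕ → ℕ) (k x : ℕ) : Finset ℕ :=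
  {y ∈ (Finset.Icc (x - b k) (x + b k)).erase x |
    Nat.dist x y ∈ Set.Ioc (clusterDiam b k) (b k)}

/-- The possible witnesses for `x` to be a point of level `k`: sets of `2 ^ k` positions at each
of which there has to be a one. -/
def witnesses (b : ℕ → ℕ) : ℕ → ℕ → Finset (Finset ℕ)
  | 0, x => {{x}}
  | k + 1, x => (partners b k x).biUnion fun y =>
      Finset.image₂ (· ∪ ·) (witnesses b k x) (witnesses b k y)

/-- A bound for the number of witnesses, see `card_witnesses_le`. -/
def witnessBound (b : ℕ → ℕ) : ℕ → ℕ
  | 0 => 1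
  | k + 1 => 2 * b k * (witnessBound b k * witnessBound b k)

section Witnesses

variable {b : ℕ → ℕ} {k x y : ℕ} {S : Finset ℕ}

lemma mem_partners : y ∈ partners b k x ↔ Nat.dist x y ∈ Set.Ioc (clusterDiam b k) (b k) := by
  simp only [partners, Finset.mem_filter, Finset.mem_erase, Finset.mem_Icc, and_iff_right_iff_imp,
    Set.mem_Ioc, Nat.dist]
  omega

lemma mem_witnesses_succ : S ∈ witnesses b (k + 1) x ↔
    ∃ y ∈ partners b k x, ∃ T ∈ witnesses b k x, ∃ T' ∈ witnesses b k y, T ∪ T' = S := by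
  simp only [witnesses, Finset.mem_biUnion, Finset.mem_image₂]

lemma card_partners_le (b : ℕ → ℕ) (k x : ℕ) : (partners b k x).card ≤ 2 * b k := by
  refine (Finset.card_filter_le _ _).trans ?_
  rw [Finset.card_erase_of_mem (by simp), Nat.card_Icc]
  omega

lemma card_witnesses_le (b : ℕ → ℕ) (k x : ℕ) : (witnesses b k x).card ≤ witnessBound b k := by
  induction k generalizing x with
  | zero => exact (Finset.card_singleton _).le
  | succ k ih =>
    refine (Finset.card_biUnion_le_card_mul _ _ _ fun y _ => ?_).trans
      (Nat.mul_le_mul_right _ (card_partners_le b k x))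
    exact (Finset.card_image₂_le _ _ _).trans (Nat.mul_le_mul (ih x) (ih y))

/-- Witnesses lie within distance `clusterDiam b k / 2`, whence those of partners are disjoint. -/
lemma two_mul_dist_le_of_mem_witnesses (hS : S ∈ witnesses b k x) (hy : y ∈ S) :
    2 * Nat.dist x y ≤ clusterDiam b k := by
  induction k generalizing x S with
  | zero =>
    obtain rfl := Finset.mem_singleton.mp hS
    obtain rfl := Finset.mem_singleton.mp hy
    simp
  | succ k ih =>
    obtain ⟨z, hz, T, hT, T', hT', rfl⟩ := mem_witnesses_succ.mp hS
    rw [clusterDiam]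
    obtain hy | hy := Finset.mem_union.mp hy
    · exact (ih hT hy).trans (Nat.le_add_right _ _)
    · have := ih hT' hy
      have := Nat.dist.triangle_inequality x z y
      have := (mem_partners.mp hz).2
      omega

lemma card_of_mem_witnesses (hS : S ∈ witnesses b k x) : S.card = 2 ^ k := by
  induction k generalizing x S with
  | zero => rw [Finset.mem_singleton.mp hS, Finset.card_singleton, pow_zero]
  | succ k ih =>
    obtain ⟨y, hy, T, hT, T', hT', rfl⟩ := mem_witnesses_succ.mp hS
    rw [Finset.card_union_of_disjoint, ih hT, ih hT', pow_succ, mul_two]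
    refine Finset.disjoint_left.mpr fun i hi hi' => ?_
    have := two_mul_dist_le_of_mem_witnesses hT hi
    have := two_mul_dist_le_of_mem_witnesses hT' hi'
    have htri := Nat.dist.triangle_inequality x i y
    rw [Nat.dist_comm i y] at htri
    have := (mem_partners.mp hy).1
    omega

lemma exists_mem_witnesses {ξ : ℕ → Bool} (hx : x ∈ exceptional b ξ k) :
    ∃ S ∈ witnesses b k x, ∀ i ∈ S, ξ i = true := by
  induction k generalizing x with
  | zero => exact ⟨{x}, Finset.mem_singleton_self _,
      fun i hi => Finset.mem_singleton.mp hi ▸ hx⟩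
  | succ k ih =>
    obtain ⟨hxk, y, hyk, hxy⟩ := hx
    obtain ⟨S, hS, hS1⟩ := ih hxk
    obtain ⟨T, hT, hT1⟩ := ih hyk
    refine ⟨S ∪ T, mem_witnesses_succ.mpr ⟨y, mem_partners.mpr hxy, S, hS, T, hT, rfl⟩,
      fun i hi => ?_⟩
    exact (Finset.mem_union.mp hi).elim (hS1 i) (hT1 i)

lemma exceptional_subset_ones (b : ℕ → ℕ) (ξ : ℕ → Bool) (k : ℕ) :
    exceptional b ξ k ⊆ {x | ξ x = true} := by
  induction k with
  | zero => exact subset_rfl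
  | succ k ih => exact (Set.sep_subset _ _).trans ih

end Witnesses

namespace IsBernoulliProduct

variable {μ : Measure (ℕ → Bool)} {p : ℝ} {b : ℕ → ℕ}

lemma measure_zeros (hμ : IsBernoulliProduct μ p) (T : Finset ℕ) :
    μ {ξ | ∀ i ∈ T, ξ i = false} = ENNReal.ofReal (1 - p) ^ T.card := by
  rw [hμ.2 T fun _ => false, Finset.prod_const]
  rfl

lemma measure_zeros_inter_ones_le (hμ : IsBernoulliProduct μ p) (T S : Finset ℕ) :
    μ ({ξ | ∀ i ∈ T, ξ i = false} ∩ {ξ | ∀ i ∈ S, ξ i = true}) ≤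
      μ {ξ | ∀ i ∈ T, ξ i = false} * ENNReal.ofReal p ^ S.card := by
  by_cases hTS : Disjoint T S
  · have hcyl : {ξ : ℕ → Bool | ∀ i ∈ T, ξ i = false} ∩ {ξ | ∀ i ∈ S, ξ i = true} =
        {ξ | ∀ i ∈ T ∪ S, ξ i = decide (i ∈ S)} := by
      ext ξ
      simp only [Set.mem_inter_iff, Set.mem_ofPred_eq, Finset.mem_union, or_imp, forall_and]
      refine and_congr (forall₂_congr fun i hi => ?_) (forall₂_congr fun i hi => ?_)
      · rw [decide_eq_false (Finset.disjoint_left.mp hTS hi)]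
      · rw [decide_eq_true hi]
    rw [hcyl, hμ.2, Finset.prod_union hTS, hμ.measure_zeros]
    refine (congrArg₂ _ (Finset.prod_eq_pow_card fun i hi => ?_)
      (Finset.prod_eq_pow_card fun i hi => ?_)).le
    · simp [Finset.disjoint_left.mp hTS hi]
    · simp [hi]
  · obtain ⟨i, hiT, hiS⟩ := Finset.not_disjoint_iff.mp hTS
    rw [show {ξ : ℕ → Bool | ∀ i ∈ T, ξ i = false} ∩ {ξ | ∀ i ∈ S, ξ i = true} = ∅ from
      Set.eq_empty_of_forall_notMem fun ξ h => by simpa [h.1 i hiT] using h.2 i hiS, measure_empty]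
    exact zero_le

lemma measure_zeros_inter_exceptional_le (hμ : IsBernoulliProduct μ p) (T : Finset ℕ) (k : ℕ) :
    μ ({ξ | ∀ i ∈ T, ξ i = false} ∩ {ξ | ∃ w ∈ exceptional b ξ k, w < b k}) ≤
      μ {ξ | ∀ i ∈ T, ξ i = false} *
        ((b k * witnessBound b k : ℕ) * ENNReal.ofReal p ^ 2 ^ k) := by
  set A : Set (ℕ → Bool) := {ξ | ∀ i ∈ T, ξ i = false}
  have hcover : A ∩ {ξ | ∃ w ∈ exceptional b ξ k, w < b k} ⊆
      ⋃ w ∈ Finset.range (b k), ⋃ S ∈ witnesses b k w, A ∩ {ξ | ∀ i ∈ S, ξ i = true} := by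
    rintro ξ ⟨hA, w, hw, hwb⟩
    obtain ⟨S, hS, hS1⟩ := exists_mem_witnesses hw
    simp only [Set.mem_iUnion]
    exact ⟨w, Finset.mem_range.mpr hwb, S, hS, hA, hS1⟩
  calc μ (A ∩ {ξ | ∃ w ∈ exceptional b ξ k, w < b k})
      ≤ ∑ w ∈ Finset.range (b k), ∑ S ∈ witnesses b k w, μ (A ∩ {ξ | ∀ i ∈ S, ξ i = true}) :=
        (measure_mono hcover).trans <| (measure_biUnion_finset_le _ _).trans <|
          Finset.sum_le_sum fun w _ => measure_biUnion_finset_le _ _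
    _ ≤ ∑ w ∈ Finset.range (b k), ∑ S ∈ witnesses b k w, μ A * ENNReal.ofReal p ^ 2 ^ k :=
        Finset.sum_le_sum fun w _ => Finset.sum_le_sum fun S hS =>
          card_of_mem_witnesses hS ▸ hμ.measure_zeros_inter_ones_le T S
    _ ≤ ∑ w ∈ Finset.range (b k), witnessBound b k * (μ A * ENNReal.ofReal p ^ 2 ^ k) := by
        refine Finset.sum_le_sum fun w _ => ?_
        rw [Finset.sum_const, nsmul_eq_mul]
        gcongr
        exact card_witnesses_le b k w
    _ = μ A * ((b k * witnessBound b k : ℕ) * ENNReal.ofReal p ^ 2 ^ k) := by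
        rw [Finset.sum_const, nsmul_eq_mul, Finset.card_range]
        push_cast
        ring

/-- If `ξ` vanishes on a long initial segment, there are no early exceptional points of the first
levels, and conditionally on this the expected number of those of all other levels is `< 1`. -/
lemma measure_forall_exceptional_pos (hμ : IsBernoulliProduct μ p) (hp : p < 1)
    (hsum : ∑' k, (b k * witnessBound b k : ℕ) * ENNReal.ofReal p ^ 2 ^ k ≠ ⊤) :
    0 < μ {ξ | ∀ k, ∀ w ∈ exceptional b ξ k, b k ≤ w} := by
  have := hμ.1
  set f : ℕ → ℝ≥0∞ := fun k => (b k * witnessBound b k : ℕ) * ENNReal.ofReal p ^ 2 ^ k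
  obtain ⟨n, hn⟩ : ∃ n, ∑' k, f (k + n) < 1 :=
    ((ENNReal.tendsto_sum_nat_add f hsum).eventually_lt_const zero_lt_one).exists
  set T := Finset.range (∑ k ∈ Finset.range n, b k)
  set A : Set (ℕ → Bool) := {ξ | ∀ i ∈ T, ξ i = false}
  set good : Set (ℕ → Bool) := {ξ | ∀ k, ∀ w ∈ exceptional b ξ k, b k ≤ w}
  have hA : μ A ≠ 0 := by
    rw [hμ.measure_zeros]
    exact pow_ne_zero _ (ENNReal.ofReal_pos.mpr (sub_pos.mpr hp)).ne'
  have hcover : A ⊆ good ∪ ⋃ k, A ∩ {ξ | ∃ w ∈ exceptional b ξ (k + n), w < b (k + n)} := by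
    intro ξ hξ
    by_contra! hbad
    simp only [good, Set.mem_union, Set.mem_ofPred_eq, Set.mem_iUnion, Set.mem_inter_iff, not_or,
      not_forall, not_exists, not_and, not_lt] at hbad
    obtain ⟨⟨k, w, hw, hwb⟩, hlate⟩ := hbad
    obtain hkn | hnk := lt_or_ge k n
    · have hwT : w ∈ T := Finset.mem_range.mpr <| (not_le.mp hwb).trans_le <|
        Finset.single_le_sum (fun _ _ => Nat.zero_le _) (Finset.mem_range.mpr hkn)
      exact Bool.false_ne_true ((hξ w hwT).symm.trans (exceptional_subset_ones b ξ k hw))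
    · obtain ⟨d, rfl⟩ := Nat.exists_eq_add_of_le' hnk
      exact hwb (hlate d hξ w hw)
  have hle : μ A ≤ μ good + μ A * ∑' k, f (k + n) :=
    calc μ A ≤ μ good + ∑' k, μ (A ∩ {ξ | ∃ w ∈ exceptional b ξ (k + n), w < b (k + n)}) :=
          (measure_mono hcover).trans <| (measure_union_le _ _).trans <|
            add_le_add_right (measure_iUnion_le _) _
      _ ≤ μ good + ∑' k, μ A * f (k + n) := by
          gcongr with k
          exact hμ.measure_zeros_inter_exceptional_le T (k + n)
      _ = μ good + μ A * ∑' k, f (k + n) := by rw [ENNReal.tsum_mul_left]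
  refine pos_iff_ne_zero.mpr fun h0 => hle.not_gt ?_
  rw [h0, zero_add]
  exact ENNReal.mul_lt_of_lt_div' (by rwa [ENNReal.div_self hA (measure_ne_top μ A)])

end IsBernoulliProduct

lemma mul_witnessBound_geometric (c M k : ℕ) :
    2 * M * (c * M ^ k * witnessBound (fun j => c * M ^ j) k) = (2 * M * c) ^ 2 ^ k := by
  induction k with
  | zero => simp [witnessBound, mul_assoc]
  | succ k ih =>
    rw [pow_succ 2 k, pow_mul, ← ih, witnessBound]
    ring

lemma IsBernoulliProduct.measure_forall_exceptional_geometric_pos {μ : Measure (ℕ → Bool)} {p : ℝ}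
    (hμ : IsBernoulliProduct μ p) {c M : ℕ} (hM : 0 < M) (hc : 0 < c) (hp : 2 * M * c * p < 1) :
    0 < μ {ξ | ∀ k, ∀ w ∈ exceptional (fun j => c * M ^ j) ξ k, c * M ^ k ≤ w} := by
  have hcM : (1 : ℝ) ≤ (2 * M * c : ℕ) := by
    exact_mod_cast Nat.mul_pos (Nat.mul_pos two_pos hM) hc
  have hp1 : p < 1 := by
    by_contra! h
    have := mul_le_mul hcM h zero_le_one (by positivity)
    push_cast at this
    linarith
  refine hμ.measure_forall_exceptional_pos (b := fun j => c * M ^ j) hp1 ?_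
  set q : ℝ≥0∞ := (2 * M * c : ℕ) * ENNReal.ofReal p with hq
  have hq1 : q < 1 := by
    rw [hq, ← ENNReal.ofReal_natCast, ← ENNReal.ofReal_mul (Nat.cast_nonneg _),
      ENNReal.ofReal_lt_one]
    exact_mod_cast hp
  have hterm : ∀ k, ((c * M ^ k * witnessBound (fun j => c * M ^ j) k : ℕ) : ℝ≥0∞) *
      ENNReal.ofReal p ^ 2 ^ k ≤ q ^ k := fun k => by
    have hcount : c * M ^ k * witnessBound (fun j => c * M ^ j) k ≤ (2 * M * c) ^ 2 ^ k :=
      mul_witnessBound_geometric c M k ▸ Nat.le_mul_of_pos_left _ (Nat.mul_pos two_pos hM)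
    calc ((c * M ^ k * witnessBound (fun j => c * M ^ j) k : ℕ) : ℝ≥0∞) * ENNReal.ofReal p ^ 2 ^ k
        ≤ (((2 * M * c) ^ 2 ^ k : ℕ) : ℝ≥0∞) * ENNReal.ofReal p ^ 2 ^ k :=
          mul_le_mul_left (Nat.cast_le.mpr hcount) _
      _ = q ^ 2 ^ k := by rw [Nat.cast_pow, ← mul_pow]
      _ ≤ q ^ k := pow_le_pow_right_of_le_one' hq1.le Nat.lt_two_pow_self.le
  refine ((ENNReal.tsum_le_tsum hterm).trans_lt ?_).ne
  rw [ENNReal.tsum_geometric, ENNReal.inv_lt_top]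
  exact tsub_pos_of_lt hq1

/-! ### Admissible scales -/

/-- The separation scales used for `η(L)`. The factor `2 * (L + 1)` is the smallest one for which
`Admissible.le_sep` holds at level `0`. -/
def sep (L k : ℕ) : ℕ := 2 * (L + 1) * (3 * (L + 1)) ^ k

/-- The blocks of `η(L)` whose index is a positive multiple of `period L k` have at least
`3 * (3 * (L + 1)) ^ k` ones. -/
def period (L k : ℕ) : ℕ := (L - 1) * L ^ k

section Scales

variable {L : ℕ}

lemma clusterDiam_sep_eq (L k : ℕ) :
    (3 * L + 2) * clusterDiam (sep L) k + 4 * (L + 1) = 4 * (L + 1) * (3 * (L + 1)) ^ k := by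
  induction k with
  | zero => simp [clusterDiam]
  | succ k ih => rw [clusterDiam, sep, mul_add, add_right_comm, ih]; ring

lemma two_mul_clusterDiam_sep_add_one_le (hL : 2 ≤ L) (k : ℕ) :
    2 * (clusterDiam (sep L) k + 1) ≤ 3 * (3 * (L + 1)) ^ k := by
  induction k with
  | zero => simp [clusterDiam]
  | succ k ih =>
    rw [clusterDiam, sep, pow_succ]
    nlinarith [Nat.mul_le_mul_right ((3 * (L + 1)) ^ k) hL]

lemma clearance_sep_succ_le (hL : 2 ≤ L) (k : ℕ) :
    6 * (L + 1) * clearance (sep L) (k + 1) ≤ (8 * L + 15) * (3 * (L + 1)) ^ (k + 1) := by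
  induction k with
  | zero =>
    simp only [clearance, clusterDiam, sep, zero_add, pow_zero, pow_one, mul_one]
    nlinarith
  | succ k ih =>
    have hdiam : (3 * L + 2) * clusterDiam (sep L) (k + 2) ≤
        4 * (L + 1) * (3 * (L + 1)) ^ (k + 2) :=
      clusterDiam_sep_eq L (k + 2) ▸ Nat.le_add_right _ _
    have hcoeff : (3 * L + 2) * (8 * L + 15) + 6 * (L + 1) * (4 * (L + 1) * (3 * (L + 1))) ≤
        (3 * L + 2) * (8 * L + 15) * (3 * (L + 1)) := by nlinarith
    refine Nat.le_of_mul_le_mul_left ?_ (show 0 < 3 * L + 2 by omega)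
    calc (3 * L + 2) * (6 * (L + 1) * clearance (sep L) (k + 2))
        = (3 * L + 2) * (6 * (L + 1) * clearance (sep L) (k + 1)) +
            6 * (L + 1) * ((3 * L + 2) * clusterDiam (sep L) (k + 2)) := by
          rw [clearance]; ring
      _ ≤ (3 * L + 2) * ((8 * L + 15) * (3 * (L + 1)) ^ (k + 1)) +
            6 * (L + 1) * (4 * (L + 1) * (3 * (L + 1)) ^ (k + 2)) := by gcongr
      _ = ((3 * L + 2) * (8 * L + 15) + 6 * (L + 1) * (4 * (L + 1) * (3 * (L + 1)))) *
            (3 * (L + 1)) ^ (k + 1) := by ring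
      _ ≤ (3 * L + 2) * (8 * L + 15) * (3 * (L + 1)) * (3 * (L + 1)) ^ (k + 1) := by gcongr
      _ = (3 * L + 2) * ((8 * L + 15) * (3 * (L + 1)) ^ (k + 2)) := by ring

lemma two_pow_mul_period (L k : ℕ) : 2 ^ k * period L k = (L - 1) * (2 * L) ^ k := by
  rw [period, mul_pow, mul_left_comm]

lemma le_sep_of_delay_le (hL : 2 ≤ L) (k : ℕ)
    (hdelay : 8 * delay (sep L) (period L) k ≤ 3 * (3 * (L + 1)) ^ k) :
    2 * clearance (sep L) k + 2 * delay (sep L) (period L) k + 2 * (2 ^ k * period L k) ≤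
      sep L k := by
  obtain ⟨n, rfl⟩ := Nat.exists_eq_add_of_le' hL
  cases k with
  | zero =>
    simp only [clearance, delay, period, sep, pow_zero]
    omega
  | succ k =>
    have hclear : 2 * clearance (sep (n + 2)) (k + 1) ≤
        (8 * (n + 2) + 15) * (3 * (n + 2 + 1)) ^ k := by
      refine Nat.le_of_mul_le_mul_left (c := 3 * (n + 2 + 1)) ?_ (Nat.succ_pos _)
      calc 3 * (n + 2 + 1) * (2 * clearance (sep (n + 2)) (k + 1))
          = 6 * (n + 2 + 1) * clearance (sep (n + 2)) (k + 1) := by ring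
        _ ≤ (8 * (n + 2) + 15) * (3 * (n + 2 + 1)) ^ (k + 1) := clearance_sep_succ_le hL k
        _ = 3 * (n + 2 + 1) * ((8 * (n + 2) + 15) * (3 * (n + 2 + 1)) ^ k) := by ring
    have hperiod : 2 ^ (k + 1) * period (n + 2) (k + 1) ≤
        (n + 1) * (2 * (n + 2)) * (3 * (n + 2 + 1)) ^ k := by
      rw [two_pow_mul_period, pow_succ', ← mul_assoc]
      exact Nat.mul_le_mul_left _ (Nat.pow_le_pow_left (by omega) k)
    rw [pow_succ] at hdelay
    rw [sep, pow_succ (3 * (n + 2 + 1))]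
    nlinarith [Nat.zero_le (n * (3 * (n + 2 + 1)) ^ k), Nat.zero_le (n * n * (3 * (n + 2 + 1)) ^ k)]

lemma eight_mul_delay_le (hL : 2 ≤ L) (k : ℕ) :
    8 * delay (sep L) (period L) k ≤ 3 * (3 * (L + 1)) ^ k := by
  induction k with
  | zero => simp [delay]
  | succ k ih =>
    have hsep := le_sep_of_delay_le hL k ih
    rw [sep] at hsep
    rw [delay, pow_succ]
    nlinarith [Nat.mul_le_mul_right ((3 * (L + 1)) ^ k) hL]

lemma sixteen_mul_sum_clusterDiam_le (hL : 2 ≤ L) (k : ℕ) :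
    16 * ∑ j ∈ Finset.range k, (clusterDiam (sep L) j + 1) ≤ 3 * (3 * (L + 1)) ^ k := by
  induction k with
  | zero => simp
  | succ k ih =>
    have hdiam := two_mul_clusterDiam_sep_add_one_le hL k
    rw [Finset.sum_range_succ, pow_succ]
    nlinarith [Nat.mul_le_mul_right ((3 * (L + 1)) ^ k) hL]

lemma nine_mul_mul_two_pow_le (k : ℕ) : 9 * (k * 2 ^ k) ≤ 8 * 3 ^ k := by
  obtain hk | hk := lt_or_ge k 2
  · interval_cases k <;> norm_num
  induction k, hk using Nat.le_induction with
  | base => norm_num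
  | succ k hk ih =>
    rw [pow_succ, pow_succ]
    nlinarith [Nat.mul_le_mul_right (2 ^ k) hk]

lemma mul_two_pow_mul_period_le (L k : ℕ) :
    9 * (L + 1) * (k * (2 ^ k * period L k)) ≤ 8 * (L - 1) * L * (3 * (L + 1)) ^ k := by
  cases k with
  | zero => simp
  | succ k =>
    calc 9 * (L + 1) * ((k + 1) * (2 ^ (k + 1) * period L (k + 1)))
        = (L - 1) * L * (L + 1) * L ^ k * (9 * ((k + 1) * 2 ^ (k + 1))) := by
          rw [period]; ring
      _ ≤ (L - 1) * L * (L + 1) * (L + 1) ^ k * (8 * 3 ^ (k + 1)) :=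
          Nat.mul_le_mul (Nat.mul_le_mul_left _ (Nat.pow_le_pow_left (Nat.le_succ L) k))
            (nine_mul_mul_two_pow_le (k + 1))
      _ = 8 * (L - 1) * L * (3 * (L + 1)) ^ (k + 1) := by rw [mul_pow]; ring

lemma sum_div_sep_mul_le (hL : 2 ≤ L) (ℓ k : ℕ) :
    4 * (L + 1) * ∑ j ∈ Finset.range k, ℓ / sep L j * (clusterDiam (sep L) j + 1) ≤
      3 * (k * ℓ) := by
  have hterm (j : ℕ) : 4 * (L + 1) * (ℓ / sep L j * (clusterDiam (sep L) j + 1)) ≤ 3 * ℓ :=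
    calc 4 * (L + 1) * (ℓ / sep L j * (clusterDiam (sep L) j + 1))
        = 2 * (L + 1) * (ℓ / sep L j) * (2 * (clusterDiam (sep L) j + 1)) := by ring
      _ ≤ 2 * (L + 1) * (ℓ / sep L j) * (3 * (3 * (L + 1)) ^ j) :=
          Nat.mul_le_mul_left _ (two_mul_clusterDiam_sep_add_one_le hL j)
      _ = 3 * (ℓ / sep L j * sep L j) := by rw [sep]; ring
      _ ≤ 3 * ℓ := Nat.mul_le_mul_left _ (Nat.div_mul_le_self _ _)
  rw [Finset.mul_sum]
  refine (Finset.sum_le_card_nsmul _ _ _ fun j _ => hterm j).trans_eq ?_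
  rw [Finset.card_range, smul_eq_mul, mul_left_comm]

lemma le_capacity_sep (hL : 2 ≤ L) (k : ℕ) :
    ∑ j ∈ Finset.range k, (2 ^ k * period L k / sep L j + 1) * (clusterDiam (sep L) j + 1) +
      2 * delay (sep L) (period L) k + clearance (sep L) k ≤ 3 * (3 * (L + 1)) ^ k := by
  cases k with
  | zero => simp [delay, clearance]
  | succ k =>
    have hclear := clearance_sep_succ_le hL k
    have hdelay := eight_mul_delay_le hL (k + 1)
    have hdiam := sixteen_mul_sum_clusterDiam_le hL (k + 1)
    have hperiod := mul_two_pow_mul_period_le L (k + 1)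
    have hdiv := sum_div_sep_mul_le hL (2 ^ (k + 1) * period L (k + 1)) (k + 1)
    simp only [add_one_mul (_ / _)]
    rw [Finset.sum_add_distrib]
    obtain ⟨n, rfl⟩ := Nat.exists_eq_add_of_le' hL
    rw [show n + 2 - 1 = n + 1 from rfl] at hperiod
    generalize (k + 1) * (2 ^ (k + 1) * period (n + 2) (k + 1)) = kℓ at *
    generalize ∑ j ∈ Finset.range (k + 1), 2 ^ (k + 1) * period (n + 2) (k + 1) / sep (n + 2) j *
      (clusterDiam (sep (n + 2)) j + 1) = D at *
    generalize ∑ j ∈ Finset.range (k + 1), (clusterDiam (sep (n + 2)) j + 1) = S at *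
    generalize (3 * (n + 2 + 1)) ^ (k + 1) = x at *
    have hD : 12 * (n + 3) ^ 2 * D ≤ 8 * (n + 1) * (n + 2) * x := by nlinarith
    refine Nat.le_of_mul_le_mul_left (c := 48 * (n + 3) ^ 2) ?_ (by positivity)
    have hS := Nat.mul_le_mul_left (3 * (n + 3) ^ 2) hdiam
    have hO := Nat.mul_le_mul_left (12 * (n + 3) ^ 2) hdelay
    have hA := Nat.mul_le_mul_left (8 * (n + 3)) hclear
    nlinarith [Nat.zero_le (n * x), Nat.zero_le (n * n * x)]

lemma admissible_sep (hL : 2 ≤ L) :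
    Admissible (sep L) (period L) fun k => 3 * (3 * (L + 1)) ^ k where
  lt_period k := (Nat.lt_pow_self hL).trans_le (Nat.le_mul_of_pos_left _ (Nat.sub_pos_of_lt hL))
  diam_add_le k := by
    have hdiam := two_mul_clusterDiam_sep_add_one_le hL (k + 1)
    rw [sep, sep, pow_succ] at *
    nlinarith [Nat.mul_le_mul_right ((3 * (L + 1)) ^ k) hL]
  le_sep k := le_sep_of_delay_le hL k (eight_mul_delay_le hL k)
  le_capacity := le_capacity_sep hL

end Scales

/-! ### The blocks of `η(L)` -/

section Letters

variable {L : ℕ}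

lemma bddAbove_pow_dvd (hL : 2 ≤ L) (j : ℕ) : BddAbove {k | L ^ k ∣ j + 1} :=
  ⟨j + 1, fun _ hk => (Nat.lt_pow_self hL).le.trans (Nat.le_of_dvd j.succ_pos hk)⟩

lemma zetaL_eq_zero {j : ℕ} (h : ¬L ∣ j + 1) : zetaL L j = 0 := by
  refine Nat.le_zero.mp (csSup_le ⟨0, one_dvd _⟩ fun k hk => ?_)
  by_contra! hk0
  exact h ((dvd_pow_self L hk0.ne').trans hk)

lemma tzeta_eq_zero {j : ℕ} (h : ¬L ∣ j + 1) : tzeta L j = 0 :=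
  if_pos (zetaL_eq_zero h)

lemma le_tzeta (hL : 2 ≤ L) {j k : ℕ} (h : L ^ (k + 1) ∣ j + 1) :
    3 * (3 * (L + 1)) ^ k ≤ tzeta L j := by
  have hk : k + 1 ≤ zetaL L j := le_csSup (bddAbove_pow_dvd hL j) h
  rw [tzeta, if_neg (by omega)]
  exact Nat.mul_le_mul_left 3 (Nat.pow_le_pow_right (by omega) (by omega))

end Letters

section Blocks

variable {η : ℕ → Bool} {i j n : ℕ}

lemma fpos_succ (η : ℕ → Bool) (j : ℕ) : fpos η (j + 1) = fpos η j + max (fmap η j) 1 := rfl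

lemma blockStart_succ_of_eq_fpos (h : blockStart η i = fpos η j) :
    blockStart η (i + 1) = fpos η j + fmap η j + 1 := by
  rw [blockStart, h, fmap]

lemma blockStart_succ_of_fmap_eq_zero (h : blockStart η i = fpos η j) (hj : fmap η j = 0) :
    blockStart η (i + 1) = fpos η (j + 1) := by
  rw [blockStart_succ_of_eq_fpos h, fpos_succ, hj]
  rfl

lemma blockStart_succ_of_fmap_pos (h : blockStart η i = fpos η j) (hj : 0 < fmap η j)
    (hj' : fmap η (j + 1) = 0) : blockStart η (i + 1) = fpos η (j + 2) := by
  rw [blockStart_succ_of_eq_fpos h, fpos_succ, fpos_succ, hj', max_eq_left hj]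
  rfl

/-- A letter of positive weight forms a single block with the zero following it, so each period of
`n + 2` letters corresponds to `n + 1` blocks. -/
lemma blockStart_eq_fpos (hzero : ∀ j, ¬n + 2 ∣ j + 1 → fmap η j = 0)
    (hpos : ∀ j, n + 2 ∣ j + 1 → 0 < fmap η j) (q : ℕ) :
    blockStart η ((n + 1) * q + 1 + n) = fpos η ((n + 2) * q + 1 + n) := by
  have hzero' (q s : ℕ) (hs : s ≤ n) : fmap η ((n + 2) * q + s) = 0 := hzero _ fun hdvd => by
    rw [add_assoc, Nat.dvd_add_right (Nat.dvd_mul_right _ _)] at hdvd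
    exact absurd (Nat.le_of_dvd s.succ_pos hdvd) (by omega)
  have hwithin (q : ℕ) (h : blockStart η ((n + 1) * q + 1) = fpos η ((n + 2) * q + 1)) :
      ∀ r ≤ n, blockStart η ((n + 1) * q + 1 + r) = fpos η ((n + 2) * q + 1 + r) := by
    intro r hr
    induction r with
    | zero => exact h
    | succ r ih =>
      refine blockStart_succ_of_fmap_eq_zero (ih (by omega)) ?_
      exact (congrArg (fmap η) (add_assoc _ 1 r)).trans (hzero' q (1 + r) (by omega))
  suffices hfirst : blockStart η ((n + 1) * q + 1) = fpos η ((n + 2) * q + 1) from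
    hwithin q hfirst n le_rfl
  induction q with
  | zero => exact blockStart_succ_of_fmap_eq_zero (j := 0) rfl (hzero' 0 0 n.zero_le)
  | succ q ih =>
    have hrun : 0 < fmap η ((n + 2) * q + 1 + n) := hpos _ ⟨q + 1, by ring⟩
    have hnext : fmap η ((n + 2) * q + 1 + n + 1) = 0 := by
      rw [show (n + 2) * q + 1 + n + 1 = (n + 2) * (q + 1) + 0 by ring]
      exact hzero' (q + 1) 0 n.zero_le
    convert blockStart_succ_of_fmap_pos (hwithin q ih n le_rfl) hrun hnext using 2 <;> ring

lemma le_blockLen_of_fmap_eq_tzeta {L k : ℕ} (hL : 2 ≤ L) (hη : fmap η = tzeta L) (hi : 1 ≤ i)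
    (hdvd : period L k ∣ i) : 3 * (3 * (L + 1)) ^ k ≤ blockLen η i := by
  obtain ⟨n, rfl⟩ := Nat.exists_eq_add_of_le' hL
  obtain ⟨d, rfl⟩ := hdvd
  obtain ⟨q, hq⟩ : ∃ q, (n + 2) ^ k * d = q + 1 :=
    Nat.exists_eq_add_one.mpr (Nat.pos_of_ne_zero fun h => by
      rw [period, mul_assoc, h, mul_zero] at hi; omega)
  have hstart : blockStart η (period (n + 2) k * d) = fpos η ((n + 2) * q + 1 + n) := by
    rw [period, mul_assoc, hq, show (n + 2 - 1) * (q + 1) = (n + 1) * q + 1 + n by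
      rw [show n + 2 - 1 = n + 1 from rfl]; ring]
    refine blockStart_eq_fpos (fun j hj => ?_) (fun j hj => ?_) q
    · rw [hη, tzeta_eq_zero hj]
    · exact hη ▸ (Nat.succ_pos 2).trans_le (le_tzeta (k := 0) hL (by rwa [zero_add, pow_one]))
  rw [blockLen, hstart, ← fmap, hη]
  refine le_tzeta hL ⟨d, ?_⟩
  rw [pow_succ', mul_assoc, hq]
  ring

end Blocks

theorem statement_18_general (L : ℕ) (hL : 2 ≤ L) (p : ℝ)
    (hp : p < 1 / (12 * ((L : ℝ) + 1) ^ 2)) (η : ℕ → Bool) (hη : Xinf η)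
    (hf : fmap η = tzeta L)
    (μ : Measure (ℕ → Bool)) (hμ : IsBernoulliProduct μ p) :
    0 < μ {ξ | Compatible η ξ} := by
  have hp' : 2 * ((3 * (L + 1) : ℕ) : ℝ) * ((2 * (L + 1) : ℕ) : ℝ) * p < 1 := by
    rw [lt_div_iff₀ (by positivity)] at hp
    push_cast
    linarith
  have hgood : 0 < μ {ξ | ∀ k, ∀ w ∈ exceptional (sep L) ξ k, sep L k ≤ w} :=
    hμ.measure_forall_exceptional_geometric_pos (by omega) (by omega) hp'
  refine hgood.trans_le (measure_mono fun ξ hξ => ?_)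
  exact compatible_of_blockLen (admissible_sep hL) hη.2
    (fun k i => le_blockLen_of_fmap_eq_tzeta hL hf) hξ

theorem statement_18 (L : ℕ) (hL : 2 ≤ L) (p : ℝ) (hp0 : 0 ≤ p)
    (hp : p < 1 / (576 * ((L : ℝ) + 1) ^ 2)) (η : ℕ → Bool) (hη : Xinf η)
    (hf : fmap η = tzeta L)
    (μ : Measure (ℕ → Bool)) (hμ : IsBernoulliProduct μ p) :
    0 < μ {ξ | Compatible η ξ} :=
  statement_18_general L hL p (hp.trans_le (by gcongr; norm_num)) η hη hf μ hμ

end Paper
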